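/- arXiv:1808.01484 — 3 statements merged into one kernel-verified Lean document; each statement's English description precedes it below -/
import Mathlib

section
/- For 0 < ν < 1, the improper integral ∫₀^∞ cos(u)/u^ν du equals Γ(1−ν)·sin(πν/2), and for 0 < ν < 2 (ν ≠ 1), the improper integral ∫₀^∞ sin(u)/u^ν du equals Γ(1−ν)·cos(πν/2); for ν = 1 this integral equals π/2. -/
open Filter Topology

/-!
Integrating by parts turns `∫₀^∞ f' u / u^ν du` into the absolutely convergent integral
`ν ∫₀^∞ u^(-ν-1) f u du`, where `f = sin` or `f = 1 - cos`. Writing `u^(-ν-1)` as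
`Γ(ν+1)⁻¹ ∫₀^∞ t^ν e^(-tu) dt` and exchanging the integrals gives `Γ(ν)⁻¹ ∫₀^∞ t^ν (𝓛 f)(t) dt`.
The Laplace transform `𝓛 f` is rational, so this is an Euler integral `∫₀^∞ t^(s-1) / (1+t²) dt`,
which the same exchange with `f u = e^(-u)` reduces to Euler's reflection formula for `Γ`.
-/

section

open MeasureTheory Set Asymptotics Real

section IntegrationByParts

variable {A : Type*} [NormedRing A] [NormedAlgebra ℝ A] [CompleteSpace A]
  {u v u' v' : ℝ → A} {a : ℝ} {a' b' : A}

lemma intervalIntegral_mul_deriv_eq_of_tendsto {b : ℝ} (hab : a < b)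
    (hu : ∀ x ∈ Ioc a b, HasDerivAt u (u' x) x) (hv : ∀ x ∈ Ioc a b, HasDerivAt v (v' x) x)
    (huv' : IntervalIntegrable (fun x ↦ u x * v' x) volume a b)
    (hu'v : IntervalIntegrable (fun x ↦ u' x * v x) volume a b)
    (h_left : Tendsto (fun x ↦ u x * v x) (𝓝[>] a) (𝓝 a')) :
    ∫ x in a..b, u x * v' x = u b * v b - a' - ∫ x in a..b, u' x * v x := by
  have h_deriv : ∀ x ∈ Ioc a b, HasDerivAt (fun x ↦ u x * v x) (u' x * v x + u x * v' x) x :=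
    fun x hx ↦ (hu x hx).mul (hv x hx)
  have h_right : Tendsto (fun x ↦ u x * v x) (𝓝[<] b) (𝓝 (u b * v b)) :=
    (h_deriv b (right_mem_Ioc.2 hab)).continuousAt.tendsto.mono_left nhdsWithin_le_nhds
  rw [eq_sub_iff_add_eq', ← intervalIntegral.integral_add hu'v huv']
  exact intervalIntegral.integral_eq_sub_of_hasDerivAt_of_tendsto hab
    (fun x hx ↦ h_deriv x (Ioo_subset_Ioc_self hx)) (hu'v.add huv') h_left h_right

lemma tendsto_intervalIntegral_mul_deriv
    (hu : ∀ x ∈ Ioi a, HasDerivAt u (u' x) x) (hv : ∀ x ∈ Ioi a, HasDerivAt v (v' x) x)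
    (huv' : ∀ b > a, IntervalIntegrable (fun x ↦ u x * v' x) volume a b)
    (hu'v : IntegrableOn (fun x ↦ u' x * v x) (Ioi a))
    (h_left : Tendsto (fun x ↦ u x * v x) (𝓝[>] a) (𝓝 a'))
    (h_infty : Tendsto (fun x ↦ u x * v x) atTop (𝓝 b')) :
    Tendsto (fun T ↦ ∫ x in a..T, u x * v' x) atTop
      (𝓝 (b' - a' - ∫ x in Ioi a, u' x * v x)) := by
  have h_lim := (h_infty.sub_const a').sub
    (intervalIntegral_tendsto_integral_Ioi a hu'v tendsto_id)
  refine h_lim.congr' ?_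
  filter_upwards [eventually_gt_atTop a] with T hT
  have hu'v_T : IntervalIntegrable (fun x ↦ u' x * v x) volume a T :=
    (intervalIntegrable_iff_integrableOn_Ioc_of_le hT.le).2 (hu'v.mono_set Ioc_subset_Ioi_self)
  exact (intervalIntegral_mul_deriv_eq_of_tendsto hT (fun x hx ↦ hu x hx.1)
    (fun x hx ↦ hv x hx.1) (huv' T hT) hu'v_T h_left).symm

end IntegrationByParts

section LaplaceMellin

variable {E : Type*} [NormedAddCommGroup E] [NormedSpace ℝ E] {f : ℝ → E} {s : ℝ}

lemma integral_rpow_sub_one_mul_exp_neg_mul_Ioi (hs : 0 < s) {u : ℝ} (hu : 0 < u) :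
    ∫ t in Ioi (0 : ℝ), t ^ (s - 1) * exp (-(t * u)) = Gamma s * u ^ (-s) := by
  simp only [mul_comm _ u]
  rw [integral_rpow_mul_exp_neg_mul_Ioi hs hu, one_div, inv_rpow hu.le, rpow_neg hu.le, mul_comm]

lemma integrableOn_rpow_sub_one_mul_exp_neg_mul_Ioi (hs : 0 < s) {u : ℝ} (hu : 0 < u) :
    IntegrableOn (fun t : ℝ ↦ t ^ (s - 1) * exp (-(t * u))) (Ioi 0) := by
  simpa only [rpow_one, neg_mul, mul_comm u] using
    integrableOn_rpow_mul_exp_neg_mul_rpow (by linarith : -1 < s - 1) one_pos hu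

lemma aestronglyMeasurable_of_integrableOn_rpow_smul {r : ℝ}
    (hf : IntegrableOn (fun u ↦ u ^ r • f u) (Ioi 0)) :
    AEStronglyMeasurable f (volume.restrict (Ioi 0)) := by
  have h_rpow : AEStronglyMeasurable (fun u : ℝ ↦ u ^ (-r)) (volume.restrict (Ioi 0)) := by
    fun_prop
  refine (h_rpow.smul hf.aestronglyMeasurable).congr ?_
  filter_upwards [ae_restrict_mem measurableSet_Ioi] with u (hu : 0 < u)
  simp [smul_smul, ← rpow_add hu]

lemma integrable_rpow_mul_exp_neg_mul_smul (hs : 0 < s)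
    (hf : IntegrableOn (fun u ↦ u ^ (-s) • f u) (Ioi 0)) :
    Integrable (Function.uncurry fun u t : ℝ ↦ (t ^ (s - 1) * exp (-(t * u))) • f u)
      ((volume.restrict (Ioi 0)).prod (volume.restrict (Ioi 0))) := by
  have h_meas : AEStronglyMeasurable
      (Function.uncurry fun u t : ℝ ↦ (t ^ (s - 1) * exp (-(t * u))) • f u)
      ((volume.restrict (Ioi 0)).prod (volume.restrict (Ioi 0))) := by
    have h_kernel : Measurable fun p : ℝ × ℝ ↦ p.2 ^ (s - 1) * exp (-(p.2 * p.1)) := by fun_prop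
    exact h_kernel.aestronglyMeasurable.smul
      (aestronglyMeasurable_of_integrableOn_rpow_smul hf).comp_fst
  have h_norm : ∀ u ∈ Ioi (0 : ℝ),
      ∫ t in Ioi (0 : ℝ), ‖(t ^ (s - 1) * exp (-(t * u))) • f u‖
        = Gamma s * ‖u ^ (-s) • f u‖ := by
    intro u (hu : 0 < u)
    calc ∫ t in Ioi (0 : ℝ), ‖(t ^ (s - 1) * exp (-(t * u))) • f u‖
        = ∫ t in Ioi (0 : ℝ), t ^ (s - 1) * exp (-(t * u)) * ‖f u‖ := by
          refine setIntegral_congr_fun measurableSet_Ioi fun t (ht : 0 < t) ↦ ?_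
          exact norm_smul_of_nonneg (by positivity) _
      _ = Gamma s * ‖u ^ (-s) • f u‖ := by
          rw [integral_mul_const, integral_rpow_sub_one_mul_exp_neg_mul_Ioi hs hu,
            norm_smul_of_nonneg (by positivity), mul_assoc]
  refine (integrable_prod_iff h_meas).2 ⟨?_, (hf.norm.const_mul (Gamma s)).congr ?_⟩
  · filter_upwards [ae_restrict_mem measurableSet_Ioi] with u hu
    exact (integrableOn_rpow_sub_one_mul_exp_neg_mul_Ioi hs hu).smul_const (f u)
  · filter_upwards [ae_restrict_mem measurableSet_Ioi] with u hu
    exact (h_norm u hu).symm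

lemma Gamma_smul_integral_rpow_neg_smul [CompleteSpace E] (hs : 0 < s)
    (hf : IntegrableOn (fun u ↦ u ^ (-s) • f u) (Ioi 0)) :
    Gamma s • ∫ u in Ioi (0 : ℝ), u ^ (-s) • f u
      = ∫ t in Ioi (0 : ℝ), t ^ (s - 1) • ∫ u in Ioi (0 : ℝ), exp (-(t * u)) • f u := by
  calc Gamma s • ∫ u in Ioi (0 : ℝ), u ^ (-s) • f u
      = ∫ u in Ioi (0 : ℝ), ∫ t in Ioi (0 : ℝ), (t ^ (s - 1) * exp (-(t * u))) • f u := by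
        rw [← integral_smul]
        refine setIntegral_congr_fun measurableSet_Ioi fun u hu ↦ ?_
        rw [integral_smul_const, integral_rpow_sub_one_mul_exp_neg_mul_Ioi hs hu, mul_smul]
    _ = ∫ t in Ioi (0 : ℝ), ∫ u in Ioi (0 : ℝ), (t ^ (s - 1) * exp (-(t * u))) • f u :=
        integral_integral_swap (integrable_rpow_mul_exp_neg_mul_smul hs hf)
    _ = ∫ t in Ioi (0 : ℝ), t ^ (s - 1) • ∫ u in Ioi (0 : ℝ), exp (-(t * u)) • f u := by
        simp only [mul_smul, integral_smul]

end LaplaceMellin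

section LaplaceTransforms

variable {t : ℝ}

lemma integral_exp_neg_mul_Ioi_zero (ht : 0 < t) :
    ∫ u in Ioi (0 : ℝ), exp (-(t * u)) = 1 / t := by
  simpa [neg_div_neg_eq] using integral_exp_mul_Ioi (neg_lt_zero.2 ht) 0

lemma integrableOn_exp_neg_mul_Ioi_zero (ht : 0 < t) :
    IntegrableOn (fun u : ℝ ↦ exp (-(t * u))) (Ioi 0) := by
  simpa only [neg_mul] using integrableOn_exp_mul_Ioi (neg_lt_zero.2 ht) 0

lemma integrableOn_exp_neg_mul_mul_cos (ht : 0 < t) (ω : ℝ) :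
    IntegrableOn (fun u : ℝ ↦ exp (-(t * u)) * cos (ω * u)) (Ioi 0) :=
  (integrableOn_exp_neg_mul_Ioi_zero ht).mul_bdd (c := 1) (by fun_prop)
    (.of_forall fun u ↦ abs_cos_le_one (ω * u))

lemma integral_exp_neg_mul_mul_cos (ht : 0 < t) (ω : ℝ) :
    ∫ u in Ioi (0 : ℝ), exp (-(t * u)) * cos (ω * u) = t / (t ^ 2 + ω ^ 2) := by
  have h_re : (-t + ω * Complex.I : ℂ).re < 0 := by simpa using ht
  calc ∫ u in Ioi (0 : ℝ), exp (-(t * u)) * cos (ω * u)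
      = ∫ u in Ioi (0 : ℝ), (Complex.exp ((-t + ω * Complex.I) * u)).re := by
        simp [Complex.exp_re]
    _ = (∫ u in Ioi (0 : ℝ), Complex.exp ((-t + ω * Complex.I) * u)).re :=
        integral_re (integrableOn_exp_mul_complex_Ioi h_re 0)
    _ = t / (t ^ 2 + ω ^ 2) := by
        rw [integral_exp_mul_complex_Ioi h_re]
        simp [Complex.div_re, Complex.normSq_apply, sq]

lemma integral_exp_neg_mul_mul_sin (ht : 0 < t) (ω : ℝ) :
    ∫ u in Ioi (0 : ℝ), exp (-(t * u)) * sin (ω * u) = ω / (t ^ 2 + ω ^ 2) := by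
  have h_re : (-t + ω * Complex.I : ℂ).re < 0 := by simpa using ht
  calc ∫ u in Ioi (0 : ℝ), exp (-(t * u)) * sin (ω * u)
      = ∫ u in Ioi (0 : ℝ), (Complex.exp ((-t + ω * Complex.I) * u)).im := by
        simp [Complex.exp_im]
    _ = (∫ u in Ioi (0 : ℝ), Complex.exp ((-t + ω * Complex.I) * u)).im :=
        integral_im (integrableOn_exp_mul_complex_Ioi h_re 0)
    _ = ω / (t ^ 2 + ω ^ 2) := by
        rw [integral_exp_mul_complex_Ioi h_re]
        simp [Complex.normSq_apply, sq, neg_div]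

lemma integral_exp_neg_mul_mul_one_sub_cos (ht : 0 < t) (ω : ℝ) :
    ∫ u in Ioi (0 : ℝ), exp (-(t * u)) * (1 - cos (ω * u)) = ω ^ 2 / (t * (t ^ 2 + ω ^ 2)) := by
  simp only [mul_sub, mul_one]
  rw [integral_sub (integrableOn_exp_neg_mul_Ioi_zero ht) (integrableOn_exp_neg_mul_mul_cos ht ω),
    integral_exp_neg_mul_Ioi_zero ht, integral_exp_neg_mul_mul_cos ht ω]
  field_simp
  ring

end LaplaceTransforms

section EulerIntegral

lemma integral_rpow_sub_one_div_one_add {s : ℝ} (hs₀ : 0 < s) (hs₁ : s < 1) :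
    ∫ t in Ioi (0 : ℝ), t ^ (s - 1) / (1 + t) = π / sin (π * s) := by
  have h_exp : ∀ u : ℝ, u ^ (-s) • exp (-u) = exp (-u) * u ^ (1 - s - 1) := by
    intro u
    rw [smul_eq_mul, mul_comm, sub_sub_cancel_left]
  have h_int : IntegrableOn (fun u : ℝ ↦ u ^ (-s) • exp (-u)) (Ioi 0) := by
    simpa only [h_exp] using GammaIntegral_convergent (sub_pos.2 hs₁)
  have h_laplace : ∀ t ∈ Ioi (0 : ℝ),
      ∫ u in Ioi (0 : ℝ), exp (-(t * u)) • exp (-u) = 1 / (1 + t) := by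
    intro t (ht : 0 < t)
    rw [← integral_exp_neg_mul_Ioi_zero (by positivity : 0 < 1 + t)]
    simp only [smul_eq_mul, ← exp_add]
    ring_nf
  calc ∫ t in Ioi (0 : ℝ), t ^ (s - 1) / (1 + t)
      = ∫ t in Ioi (0 : ℝ), t ^ (s - 1) • ∫ u in Ioi (0 : ℝ), exp (-(t * u)) • exp (-u) := by
        refine setIntegral_congr_fun measurableSet_Ioi fun t ht ↦ ?_
        rw [h_laplace t ht, smul_eq_mul, mul_one_div]
    _ = Gamma s * ∫ u in Ioi (0 : ℝ), u ^ (-s) • exp (-u) :=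
        (Gamma_smul_integral_rpow_neg_smul hs₀ h_int).symm
    _ = Gamma s * Gamma (1 - s) := by
        simp only [h_exp, Gamma_eq_integral (sub_pos.2 hs₁)]
    _ = π / sin (π * s) := Gamma_mul_Gamma_one_sub s

lemma integral_rpow_sub_one_div_one_add_rpow {s p : ℝ} (hs : 0 < s) (hsp : s < p) :
    ∫ t in Ioi (0 : ℝ), t ^ (s - 1) / (1 + t ^ p) = π / (p * sin (π * (s / p))) := by
  have hp : 0 < p := hs.trans hsp
  have h_subst : ∫ t in Ioi (0 : ℝ), p * (t ^ (s - 1) / (1 + t ^ p)) = π / sin (π * (s / p)) := by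
    rw [← integral_rpow_sub_one_div_one_add (div_pos hs hp) ((div_lt_one hp).2 hsp),
      ← integral_comp_rpow_Ioi_of_pos (g := fun t ↦ t ^ (s / p - 1) / (1 + t)) hp]
    refine setIntegral_congr_fun measurableSet_Ioi fun t (ht : 0 < t) ↦ ?_
    have h_exponent : p - 1 + p * (s / p - 1) = s - 1 := by
      field_simp
      ring
    simp only [smul_eq_mul]
    rw [← rpow_mul ht.le, ← h_exponent, rpow_add ht]
    ring
  rw [integral_const_mul] at h_subst
  rw [mul_comm p, ← div_div, ← h_subst, mul_div_cancel_left₀ _ hp.ne']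

end EulerIntegral

section OscillatoryIntegral

variable {f f' : ℝ → ℝ} {ν k : ℝ}

lemma integrableOn_rpow_neg_mul_of_isBigO (hν : 0 < ν) (hνk : ν < k)
    (hf : ContinuousOn f (Ioi 0)) (hf_zero : f =O[𝓝[>] 0] fun u ↦ u ^ k)
    (hf_top : f =O[atTop] fun _ ↦ (1 : ℝ)) :
    IntegrableOn (fun u ↦ u ^ (-(ν + 1)) * f u) (Ioi 0) := by
  have h := mellin_convergent_of_isBigO_scalar (a := 0) (b := -k) (s := -ν)
    (hf.locallyIntegrableOn measurableSet_Ioi) (by simpa using hf_top) (by linarith)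
    (by simpa using hf_zero) (by linarith)
  simpa only [neg_add'] using h

lemma tendsto_rpow_neg_mul_nhdsGT_zero (hνk : ν < k) (hf : f =O[𝓝[>] 0] fun u ↦ u ^ k) :
    Tendsto (fun u ↦ u ^ (-ν) * f u) (𝓝[>] 0) (𝓝 0) := by
  have h_lim : Tendsto (fun u : ℝ ↦ u ^ (k - ν)) (𝓝[>] 0) (𝓝 0) := by
    have h := (continuousAt_rpow_const 0 (k - ν) (.inr (sub_pos.2 hνk).le)).tendsto
    rw [zero_rpow (sub_pos.2 hνk).ne'] at h
    exact h.mono_left nhdsWithin_le_nhds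
  refine (((isBigO_refl (fun u : ℝ ↦ u ^ (-ν)) _).mul hf).congr' .rfl ?_).trans_tendsto h_lim
  filter_upwards [self_mem_nhdsWithin] with u (hu : 0 < u)
  rw [← rpow_add hu, neg_add_eq_sub]

lemma tendsto_rpow_neg_mul_atTop (hν : 0 < ν) (hf : f =O[atTop] fun _ ↦ (1 : ℝ)) :
    Tendsto (fun u ↦ u ^ (-ν) * f u) atTop (𝓝 0) :=
  (((isBigO_refl (fun u : ℝ ↦ u ^ (-ν)) _).mul hf).congr_right fun _ ↦ mul_one _).trans_tendsto
    (tendsto_rpow_neg_atTop hν)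

lemma tendsto_intervalIntegral_rpow_neg_mul_deriv (hν : 0 < ν) (hνk : ν < k)
    (hf : ∀ u ∈ Ioi 0, HasDerivAt f (f' u) u) (hf_zero : f =O[𝓝[>] 0] fun u ↦ u ^ k)
    (hf_top : f =O[atTop] fun _ ↦ (1 : ℝ))
    (hf' : ∀ T > 0, IntervalIntegrable (fun u ↦ u ^ (-ν) * f' u) volume 0 T) :
    Tendsto (fun T ↦ ∫ u in 0..T, u ^ (-ν) * f' u) atTop
      (𝓝 (ν * ∫ u in Ioi 0, u ^ (-(ν + 1)) * f u)) := by
  have h_rpow : ∀ u ∈ Ioi (0 : ℝ), HasDerivAt (fun u ↦ u ^ (-ν)) (-ν * u ^ (-(ν + 1))) u :=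
    fun u hu ↦ by simpa only [neg_add'] using hasDerivAt_rpow_const (.inl (ne_of_gt hu))
  have h_int := (integrableOn_rpow_neg_mul_of_isBigO hν hνk
    (fun u hu ↦ (hf u hu).continuousAt.continuousWithinAt) hf_zero hf_top).const_mul (-ν)
  simp only [← mul_assoc] at h_int
  have h_parts := tendsto_intervalIntegral_mul_deriv h_rpow hf hf' h_int
    (tendsto_rpow_neg_mul_nhdsGT_zero hνk hf_zero) (tendsto_rpow_neg_mul_atTop hν hf_top)
  simpa only [mul_assoc, integral_const_mul, integral_neg, sub_zero, zero_sub,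
    neg_mul, neg_neg] using h_parts

lemma intervalIntegral_div_rpow {T : ℝ} (hT : 0 ≤ T) :
    ∫ u in 0..T, f u / u ^ ν = ∫ u in 0..T, u ^ (-ν) * f u := by
  refine intervalIntegral.integral_congr fun u hu ↦ ?_
  rw [uIcc_of_le hT] at hu
  simp only [rpow_neg hu.1, div_eq_inv_mul]

lemma tendsto_intervalIntegral_deriv_div_rpow (hν : 0 < ν) (hνk : ν < k)
    (hf : ∀ u ∈ Ioi 0, HasDerivAt f (f' u) u) (hf_zero : f =O[𝓝[>] 0] fun u ↦ u ^ k)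
    (hf_top : f =O[atTop] fun _ ↦ (1 : ℝ))
    (hf' : ∀ T > 0, IntervalIntegrable (fun u ↦ u ^ (-ν) * f' u) volume 0 T) :
    Tendsto (fun T ↦ ∫ u in 0..T, f' u / u ^ ν) atTop
      (𝓝 ((∫ t in Ioi 0, t ^ ν * ∫ u in Ioi 0, exp (-(t * u)) * f u) / Gamma ν)) := by
  have h_int := integrableOn_rpow_neg_mul_of_isBigO hν hνk
    (fun u hu ↦ (hf u hu).continuousAt.continuousWithinAt) hf_zero hf_top
  have h_laplace := Gamma_smul_integral_rpow_neg_smul (by linarith : 0 < ν + 1) h_int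
  simp only [smul_eq_mul, add_sub_cancel_right, Gamma_add_one hν.ne'] at h_laplace
  have h_limit : (∫ t in Ioi 0, t ^ ν * ∫ u in Ioi 0, exp (-(t * u)) * f u) / Gamma ν
      = ν * ∫ u in Ioi 0, u ^ (-(ν + 1)) * f u := by
    rw [← h_laplace, div_eq_iff (Gamma_pos_of_pos hν).ne']
    ring
  rw [h_limit]
  refine (tendsto_intervalIntegral_rpow_neg_mul_deriv hν hνk hf hf_zero hf_top hf').congr' ?_
  filter_upwards [eventually_ge_atTop 0] with T hT
  exact (intervalIntegral_div_rpow hT).symm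

end OscillatoryIntegral

section Fresnel

variable {ν : ℝ}

lemma integral_rpow_mul_laplace_sin (hν₀ : -1 < ν) (hν₁ : ν < 1) :
    ∫ t in Ioi (0 : ℝ), t ^ ν * ∫ u in Ioi (0 : ℝ), exp (-(t * u)) * sin u
      = π / (2 * cos (π * ν / 2)) := by
  have h_angle : π * ((ν + 1) / 2) = π * ν / 2 + π / 2 := by ring
  rw [← sin_add_pi_div_two, ← h_angle,
    ← integral_rpow_sub_one_div_one_add_rpow (by linarith) (by linarith : ν + 1 < 2)]
  refine setIntegral_congr_fun measurableSet_Ioi fun t ht ↦ ?_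
  have h_sin := integral_exp_neg_mul_mul_sin ht 1
  simp only [one_mul, one_pow] at h_sin
  simp only [h_sin, add_sub_cancel_right, rpow_two]
  ring

lemma integral_rpow_mul_laplace_one_sub_cos (hν₀ : 0 < ν) (hν₂ : ν < 2) :
    ∫ t in Ioi (0 : ℝ), t ^ ν * ∫ u in Ioi (0 : ℝ), exp (-(t * u)) * (1 - cos u)
      = π / (2 * sin (π * ν / 2)) := by
  rw [mul_div_assoc, ← integral_rpow_sub_one_div_one_add_rpow hν₀ hν₂]
  refine setIntegral_congr_fun measurableSet_Ioi fun t (ht : 0 < t) ↦ ?_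
  have h_one_sub_cos := integral_exp_neg_mul_mul_one_sub_cos ht 1
  simp only [one_mul, one_pow] at h_one_sub_cos
  simp only [h_one_sub_cos, rpow_sub_one ht.ne', rpow_two]
  field_simp
  ring

lemma isBigO_one_sub_cos_rpow_two : (fun u ↦ 1 - cos u) =O[𝓝[>] 0] fun u ↦ u ^ (2 : ℝ) := by
  refine .of_bound 1 (.of_forall fun u ↦ ?_)
  rw [norm_eq_abs, abs_of_nonneg (sub_nonneg.2 (cos_le_one u)), rpow_two, norm_pow, norm_eq_abs,
    sq_abs]
  linarith [one_sub_sq_div_two_le_cos (x := u), sq_nonneg u]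

lemma intervalIntegrable_rpow_neg_mul_sin (hν : ν < 2) {T : ℝ} (hT : 0 ≤ T) :
    IntervalIntegrable (fun u ↦ u ^ (-ν) * sin u) volume 0 T := by
  have h_sinc : IntervalIntegrable (fun u ↦ u ^ (1 - ν) * sinc u) volume 0 T :=
    (intervalIntegral.intervalIntegrable_rpow' (by linarith)).mul_continuousOn
      continuous_sinc.continuousOn
  refine h_sinc.congr fun u hu ↦ ?_
  have hu₀ : 0 < u := (uIoc_of_le hT ▸ hu).1
  simp only [sinc_of_ne_zero hu₀.ne', sub_eq_neg_add, rpow_add_one hu₀.ne']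
  field_simp

lemma tendsto_integral_cos_div_rpow (hν₀ : 0 < ν) (hν₁ : ν < 1) :
    Tendsto (fun T ↦ ∫ u in 0..T, cos u / u ^ ν) atTop
      (𝓝 (π / (2 * cos (π * ν / 2)) / Gamma ν)) := by
  have h_zero : sin =O[𝓝[>] 0] fun u ↦ u ^ (1 : ℝ) := by
    simp only [rpow_one]
    exact .of_bound 1 (.of_forall fun u ↦ by simpa using abs_sin_le_abs)
  have h_top : sin =O[atTop] fun _ ↦ (1 : ℝ) :=
    .of_bound 1 (.of_forall fun u ↦ by simpa using abs_sin_le_one u)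
  have h_int : ∀ T > 0, IntervalIntegrable (fun u ↦ u ^ (-ν) * cos u) volume 0 T := fun T _ ↦
    (intervalIntegral.intervalIntegrable_rpow' (by linarith)).mul_continuousOn (by fun_prop)
  rw [← integral_rpow_mul_laplace_sin (by linarith) hν₁]
  exact tendsto_intervalIntegral_deriv_div_rpow hν₀ hν₁ (fun u _ ↦ hasDerivAt_sin u)
    h_zero h_top h_int

lemma tendsto_integral_sin_div_rpow (hν₀ : 0 < ν) (hν₂ : ν < 2) :
    Tendsto (fun T ↦ ∫ u in 0..T, sin u / u ^ ν) atTop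
      (𝓝 (π / (2 * sin (π * ν / 2)) / Gamma ν)) := by
  have h_deriv : ∀ u ∈ Ioi (0 : ℝ), HasDerivAt (fun u ↦ 1 - cos u) (sin u) u := fun u _ ↦ by
    simpa using (hasDerivAt_cos u).const_sub 1
  have h_top : (fun u ↦ 1 - cos u) =O[atTop] fun _ ↦ (1 : ℝ) :=
    .of_bound 2 (.of_forall fun u ↦ by
      rw [norm_eq_abs, abs_of_nonneg (sub_nonneg.2 (cos_le_one u)), norm_one, mul_one]
      linarith [neg_one_le_cos u])
  rw [← integral_rpow_mul_laplace_one_sub_cos hν₀ hν₂]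
  exact tendsto_intervalIntegral_deriv_div_rpow hν₀ hν₂ h_deriv isBigO_one_sub_cos_rpow_two
    h_top fun T hT ↦ intervalIntegrable_rpow_neg_mul_sin hν₂ hT.le

end Fresnel

section Reflection

lemma Gamma_mul_Gamma_one_sub_half_angle (ν : ℝ) :
    Gamma ν * Gamma (1 - ν) = π / (2 * sin (π * ν / 2) * cos (π * ν / 2)) := by
  rw [Gamma_mul_Gamma_one_sub, ← sin_two_mul, mul_div_cancel₀ _ two_ne_zero]

variable {ν : ℝ}

lemma Gamma_one_sub_mul_sin (hν : 0 < ν) (h_sin : sin (π * ν / 2) ≠ 0) :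
    Gamma (1 - ν) * sin (π * ν / 2) = π / (2 * cos (π * ν / 2)) / Gamma ν := by
  rw [eq_div_iff (Gamma_pos_of_pos hν).ne', mul_right_comm, mul_comm (Gamma (1 - ν)),
    Gamma_mul_Gamma_one_sub_half_angle]
  field_simp

lemma Gamma_one_sub_mul_cos (hν : 0 < ν) (h_cos : cos (π * ν / 2) ≠ 0) :
    Gamma (1 - ν) * cos (π * ν / 2) = π / (2 * sin (π * ν / 2)) / Gamma ν := by
  rw [eq_div_iff (Gamma_pos_of_pos hν).ne', mul_right_comm, mul_comm (Gamma (1 - ν)),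
    Gamma_mul_Gamma_one_sub_half_angle]
  field_simp

lemma sin_pi_mul_div_two_pos (hν₀ : 0 < ν) (hν₂ : ν < 2) : 0 < sin (π * ν / 2) :=
  sin_pos_of_pos_of_lt_pi (by positivity) (by nlinarith [pi_pos])

lemma cos_pi_mul_div_two_ne_zero (hν₀ : 0 ≤ ν) (hν₂ : ν ≤ 2) (hν₁ : ν ≠ 1) :
    cos (π * ν / 2) ≠ 0 := by
  intro h_cos
  have h_eq : π * ν / 2 = π / 2 :=
    injOn_cos ⟨by positivity, by nlinarith [pi_pos]⟩ ⟨by positivity, by linarith [pi_pos]⟩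
      (h_cos.trans cos_pi_div_two.symm)
  exact hν₁ (mul_left_cancel₀ pi_ne_zero (by linarith))

end Reflection

end

/-- Classical Fresnel-type integrals: for `0 < ν < 1`,
`∫₀^∞ cos u / u^ν du = Γ(1−ν) sin(πν/2)`; for `0 < ν < 2`, `ν ≠ 1`,
`∫₀^∞ sin u / u^ν du = Γ(1−ν) cos(πν/2)`; and for `ν = 1` the latter equals `π/2`.
The integrals are improper Riemann integrals `lim_{T→∞} ∫₀^T`. -/
theorem stmt0 (ν : ℝ) :
    ((0 < ν ∧ ν < 1) →
      Tendsto (fun T : ℝ => ∫ u in (0:ℝ)..T, Real.cos u / u ^ ν) atTop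
        (𝓝 (Real.Gamma (1 - ν) * Real.sin (Real.pi * ν / 2)))) ∧
    ((0 < ν ∧ ν < 2 ∧ ν ≠ 1) →
      Tendsto (fun T : ℝ => ∫ u in (0:ℝ)..T, Real.sin u / u ^ ν) atTop
        (𝓝 (Real.Gamma (1 - ν) * Real.cos (Real.pi * ν / 2)))) ∧
    (ν = 1 →
      Tendsto (fun T : ℝ => ∫ u in (0:ℝ)..T, Real.sin u / u ^ ν) atTop
        (𝓝 (Real.pi / 2))) := by
  refine ⟨?_, ?_, ?_⟩
  · rintro ⟨hν₀, hν₁⟩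
    rw [Gamma_one_sub_mul_sin hν₀ (sin_pi_mul_div_two_pos hν₀ (hν₁.trans one_lt_two)).ne']
    exact tendsto_integral_cos_div_rpow hν₀ hν₁
  · rintro ⟨hν₀, hν₂, hν₁⟩
    rw [Gamma_one_sub_mul_cos hν₀ (cos_pi_mul_div_two_ne_zero hν₀.le hν₂.le hν₁)]
    exact tendsto_integral_sin_div_rpow hν₀ hν₂
  · rintro rfl
    simpa using tendsto_integral_sin_div_rpow one_pos one_lt_two
end

section
/- Let Y be a strictly stable process on ℝ of index α ∈ (1,2) with skewness parameter γ, |γ| ≤ 2−α, whose density at time t is 𝔭_t. Then ∫_{−∞}^{∞} 𝔭_t(x)·|x| dx = (2 t^{1/α}/π)·Γ(1 − 1/α)·sin(π(α−γ)/(2α)). -/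
open Filter Topology

/-- The characteristic exponent `ψ(θ) = e^{i sgn(θ) πγ/2} |θ|^α` of a strictly
stable law of index `α` with skewness parameter `γ`. -/
noncomputable def stableExponent (α γ θ : ℝ) : ℂ :=
  Complex.exp (Complex.I * (Real.pi * γ / 2) * Real.sign θ) * ((|θ| ^ α : ℝ) : ℂ)

/-- The continuous density `𝔭_t(x)` of `Y_t`, where `Y` is the stable process
with `E[e^{iθ Y_t}] = e^{−tψ(θ)}`, obtained by Fourier inversion. -/
noncomputable def stableDensity (α γ t x : ℝ) : ℝ :=
  (1 / (2 * Real.pi)) *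
    ∫ θ : ℝ, (Complex.exp (-(t : ℂ) * stableExponent α γ θ - Complex.I * θ * x)).re

/-!
By Fourier inversion `π 𝔭_t(x)` is the real part of `L(ix)`, where `L` is the Laplace transform of
`exp (-w s ^ α)` and `w = t e^{iπγ/2}`. Integration by parts turns `x L(ix)` into
`i α w ∫ s ^ (α - 1) exp (-w s ^ α - i x s) ds - i`, and the constant `-i` has no real part.
Integrating over `x > 0` and exchanging the integrals leaves `α w ∫ s ^ (α - 2) exp (-w s ^ α) ds`,
a Gamma integral with value `w ^ (1 / α) Γ(1 - 1 / α)`. The exchange is legitimate after the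
half-line of integration in `s` has been rotated slightly, so that `exp (-i x s)` decays. Negative
`x` amounts to replacing `γ` by `-γ`.
-/

open MeasureTheory Set
open Complex (I)

section ExpSubstitution

variable {E : Type*} [NormedAddCommGroup E] [NormedSpace ℝ E] (g : ℝ → E)

lemma integral_comp_exp : ∫ x : ℝ, Real.exp x • g (Real.exp x) = ∫ s in Ioi 0, g s := by
  rw [← Real.range_exp, ← image_univ, integral_image_eq_integral_abs_deriv_smul MeasurableSet.univ
    (fun x _ => (Real.hasDerivAt_exp x).hasDerivWithinAt) Real.exp_injective.injOn]
  simp only [Real.abs_exp, Measure.restrict_univ]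

lemma integrable_comp_exp_iff :
    Integrable (fun x : ℝ => Real.exp x • g (Real.exp x)) ↔ IntegrableOn g (Ioi 0) := by
  rw [← Real.range_exp, ← image_univ, integrableOn_image_iff_integrableOn_abs_deriv_smul
    MeasurableSet.univ (fun x _ => (Real.hasDerivAt_exp x).hasDerivWithinAt)
    Real.exp_injective.injOn]
  simp only [Real.abs_exp, integrableOn_univ]

end ExpSubstitution

section HorizontalLines

variable {E : Type*} [NormedAddCommGroup E] [NormedSpace ℂ E] {F : ℂ → E}

lemma hasDerivAt_comp_ofReal_add_mul_I {F' : E} {x η : ℝ} (h : HasDerivAt F F' (x + η * I)) :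
    HasDerivAt (fun x : ℝ => F (x + η * I)) F' x := by
  have hline : HasDerivAt (fun x : ℝ => (x : ℂ) + η * I) 1 x :=
    (hasDerivAt_id x).ofReal_comp.add_const _
  simpa [Function.comp_def] using h.scomp x hline

lemma hasDerivAt_comp_add_ofReal_mul_I {F' : E} {x η : ℝ} (h : HasDerivAt F F' (x + η * I)) :
    HasDerivAt (fun η : ℝ => F (x + η * I)) (I • F') η := by
  have hline : HasDerivAt (fun η : ℝ => (x : ℂ) + η * I) I η := by
    simpa using ((hasDerivAt_id η).ofReal_comp.mul_const I).const_add (x : ℂ)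
  exact h.scomp η hline

variable [CompleteSpace E] {U : Set ℝ} {G : ℝ → ℝ}

/-- Along the lines, `∂F/∂η = i ∂F/∂x`, whose integral over `x` vanishes. -/
lemma hasDerivAt_integral_horizontal_line (hU : IsOpen U)
    (hF : ∀ η ∈ U, ∀ x : ℝ, DifferentiableAt ℂ F (x + η * I))
    (hint : ∀ η ∈ U, Integrable fun x : ℝ => F (x + η * I)) (hG : Integrable G)
    (hbound : ∀ η ∈ U, ∀ x : ℝ, ‖deriv F (x + η * I)‖ ≤ G x) {η : ℝ} (hη : η ∈ U) :
    HasDerivAt (fun η : ℝ => ∫ x : ℝ, F (x + η * I)) 0 η := by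
  have hmeas : AEStronglyMeasurable fun x : ℝ => deriv F (x + η * I) :=
    ((stronglyMeasurable_deriv F).comp_measurable (by fun_prop)).aestronglyMeasurable
  have hderiv_int : Integrable fun x : ℝ => deriv F (x + η * I) :=
    hG.mono' hmeas (Eventually.of_forall (hbound η hη))
  have hzero : ∫ x : ℝ, deriv F (x + η * I) = 0 :=
    integral_eq_zero_of_hasDerivAt_of_integrable
      (fun x => hasDerivAt_comp_ofReal_add_mul_I (hF η hη x).hasDerivAt) hderiv_int (hint η hη)
  have hderiv := (hasDerivAt_integral_of_dominated_loc_of_deriv_le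
    (F' := fun (η x : ℝ) => I • deriv F (x + η * I)) (hU.mem_nhds hη)
    (eventually_of_mem (hU.mem_nhds hη) fun η hη => (hint η hη).aestronglyMeasurable)
    (hint η hη) (hmeas.const_smul I)
    (Eventually.of_forall fun x η hη => by simpa [norm_smul] using hbound η hη x) hG
    (Eventually.of_forall fun x η hη => hasDerivAt_comp_add_ofReal_mul_I (hF η hη x).hasDerivAt)).2
  rwa [integral_smul, hzero, smul_zero] at hderiv

theorem integral_horizontal_line_eq (hU : IsOpen U) (hconn : IsPreconnected U)
    (hF : ∀ η ∈ U, ∀ x : ℝ, DifferentiableAt ℂ F (x + η * I))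
    (hint : ∀ η ∈ U, Integrable fun x : ℝ => F (x + η * I)) (hG : Integrable G)
    (hbound : ∀ η ∈ U, ∀ x : ℝ, ‖deriv F (x + η * I)‖ ≤ G x)
    {η₁ η₂ : ℝ} (h₁ : η₁ ∈ U) (h₂ : η₂ ∈ U) :
    ∫ x : ℝ, F (x + η₁ * I) = ∫ x : ℝ, F (x + η₂ * I) :=
  have hderiv {η : ℝ} (hη : η ∈ U) := hasDerivAt_integral_horizontal_line hU hF hint hG hbound hη
  hU.is_const_of_deriv_eq_zero hconn
    (fun _ hη => (hderiv hη).differentiableAt.differentiableWithinAt)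
    (fun _ hη => (hderiv hη).deriv) h₁ h₂

end HorizontalLines

section Majorant

variable {α a k : ℝ}

lemma exists_forall_mul_le_mul_rpow_add (hα : 1 < α) (ha : 0 < a) (M : ℝ) :
    ∃ C, ∀ s, 0 ≤ s → M * s ≤ a * s ^ α + C := by
  set c := (a * α) ^ α⁻¹
  have hc_pos : 0 < c := by positivity
  have hc_pow : c ^ α = a * α := Real.rpow_inv_rpow (by positivity) (by positivity)
  refine ⟨(|M| / c) ^ α.conjExponent / α.conjExponent, fun s hs => ?_⟩
  calc M * s ≤ |M| * s := by gcongr; exact le_abs_self M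
    _ = c * s * (|M| / c) := by field_simp
    _ ≤ (c * s) ^ α / α + (|M| / c) ^ α.conjExponent / α.conjExponent :=
        Real.young_inequality_of_nonneg (by positivity) (by positivity) (.conjExponent hα)
    _ = a * s ^ α + (|M| / c) ^ α.conjExponent / α.conjExponent := by
        rw [Real.mul_rpow hc_pos.le hs, hc_pow]
        field_simp

lemma integrableOn_rpow_mul_exp_mul_sub_mul_rpow (hα : 1 < α) (hk : -1 < k) (ha : 0 < a) (M : ℝ) :
    IntegrableOn (fun s : ℝ => s ^ k * Real.exp (M * s - a * s ^ α)) (Ioi 0) := by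
  obtain ⟨C, hC⟩ := exists_forall_mul_le_mul_rpow_add hα (half_pos ha) M
  refine ((integrableOn_rpow_mul_exp_neg_mul_rpow hk (by positivity) (half_pos ha)).const_mul
    (Real.exp C)).mono' (by fun_prop) ?_
  filter_upwards [ae_restrict_mem measurableSet_Ioi] with s (hs : 0 < s)
  rw [Real.norm_of_nonneg (by positivity), mul_left_comm, ← Real.exp_add]
  gcongr
  linarith [hC s hs.le]

end Majorant

lemma integral_mul_abs_eq_add {f : ℝ → ℝ} (hpos : IntegrableOn (fun x => x * f x) (Ioi 0))
    (hneg : IntegrableOn (fun x => x * f (-x)) (Ioi 0)) :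
    ∫ x : ℝ, f x * |x| = (∫ x in Ioi 0, x * f x) + ∫ x in Ioi 0, x * f (-x) := by
  have habs (g : ℝ → ℝ) : EqOn (fun x => x * g x) (fun x => g x * |x|) (Ioi 0) :=
    fun x (hx : 0 < x) => by simp only [abs_of_pos hx, mul_comm]
  have hint_pos := hpos.congr_fun (habs f) measurableSet_Ioi
  have hint_neg : IntegrableOn (fun x => f x * |x|) (Iic 0) := by
    have hreflect := hneg.congr_fun (habs fun x => f (-x)) measurableSet_Ioi
    rw [← neg_zero (G := ℝ)] at hreflect
    rw [integrableOn_Iic_iff_integrableOn_Iio]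
    simpa only [neg_neg, abs_neg] using hreflect.comp_neg_Iio
  have hval_neg : ∫ x in Iic 0, f x * |x| = ∫ x in Ioi 0, x * f (-x) := by
    have hreflect := integral_comp_neg_Iic 0 fun x => f (-x) * |x|
    simp only [neg_neg, abs_neg, neg_zero] at hreflect
    rw [hreflect, setIntegral_congr_fun measurableSet_Ioi (habs fun x => f (-x))]
  rw [← intervalIntegral.integral_Iic_add_Ioi hint_neg hint_pos, hval_neg,
    ← setIntegral_congr_fun measurableSet_Ioi (habs f), add_comm]

/-- The integrand `s ^ k * exp (-w s ^ α - l s)` of `stretchedLaplace`. -/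
noncomputable def stretchedExp (α k : ℝ) (w l : ℂ) (s : ℝ) : ℂ :=
  (s ^ k : ℝ) * Complex.exp (-w * (s ^ α : ℝ) - l * s)

/-- The Laplace transform at `l` of `s ^ k * exp (-w s ^ α)`, as an integral over `(0, ∞)`. The
inversion formula for a stable density amounts to its value at `k = 0` and imaginary `l`. -/
noncomputable def stretchedLaplace (α k : ℝ) (w l : ℂ) : ℂ :=
  ∫ s in Ioi 0, stretchedExp α k w l s

/-- The integrand of `stretchedLaplace` after the substitution `s = exp ζ`. Unlike `s ^ α`, it is
entire, so that rotating the half-line `(0, ∞)` becomes a vertical shift. -/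
noncomputable def logStretchedExp (α k : ℝ) (w l ζ : ℂ) : ℂ :=
  Complex.exp ((k + 1) * ζ - w * Complex.exp (α * ζ) - l * Complex.exp ζ)

section StretchedExp

variable {α k : ℝ} {w l : ℂ}

lemma norm_stretchedExp (α k : ℝ) (w l : ℂ) {s : ℝ} (hs : 0 ≤ s) :
    ‖stretchedExp α k w l s‖ = s ^ k * Real.exp (-l.re * s - w.re * s ^ α) := by
  rw [stretchedExp, norm_mul, Complex.norm_exp, Complex.norm_real,
    Real.norm_of_nonneg (by positivity), Complex.sub_re, Complex.re_mul_ofReal,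
    Complex.re_mul_ofReal, Complex.neg_re]
  ring_nf

lemma integrableOn_stretchedExp (hα : 1 < α) (hk : -1 < k) (hw : 0 < w.re) (l : ℂ) :
    IntegrableOn (stretchedExp α k w l) (Ioi 0) := by
  refine (integrableOn_rpow_mul_exp_mul_sub_mul_rpow hα hk hw (-l.re)).mono'
    (by unfold stretchedExp; fun_prop) ?_
  filter_upwards [ae_restrict_mem measurableSet_Ioi] with s (hs : 0 < s)
  exact (norm_stretchedExp α k w l hs.le).le

lemma stretchedExp_add_one_ofReal_mul (α k : ℝ) (w l : ℂ) (x : ℝ) {s : ℝ} (hs : 0 < s) :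
    stretchedExp α (k + 1) w (x * l) s =
      s * stretchedExp α k w 0 s * Complex.exp (-(l * s) * x) := by
  have hexp : -w * (s ^ α : ℝ) - x * l * s = (-w * (s ^ α : ℝ) - 0 * s) + -(l * s) * x := by ring
  rw [stretchedExp, stretchedExp, Real.rpow_add_one hs.ne', hexp, Complex.exp_add]
  push_cast
  ring

lemma hasDerivAt_stretchedExp_zero (α : ℝ) (w l : ℂ) {s : ℝ} (hs : 0 < s) :
    HasDerivAt (stretchedExp α 0 w l)
      (-(α * w) * stretchedExp α (α - 1) w l s - l * stretchedExp α 0 w l s) s := by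
  have hpow : HasDerivAt (fun s : ℝ => ((s ^ α : ℝ) : ℂ)) ((α * s ^ (α - 1) : ℝ) : ℂ) s :=
    (Real.hasDerivAt_rpow_const (Or.inl hs.ne')).ofReal_comp
  have hid : HasDerivAt (fun s : ℝ => (s : ℂ)) 1 s := (hasDerivAt_id s).ofReal_comp
  have hexp := ((hpow.const_mul (-w)).sub (hid.const_mul l)).cexp
  convert! hexp using 1
  · ext s
    simp [stretchedExp]
  · simp only [stretchedExp, Real.rpow_zero, Pi.sub_apply]
    push_cast
    ring

theorem mul_stretchedLaplace_zero (hα : 1 < α) (hw : 0 < w.re) (l : ℂ) :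
    l * stretchedLaplace α 0 w l = 1 - α * w * stretchedLaplace α (α - 1) w l := by
  have hint_pow := integrableOn_stretchedExp hα (by linarith : -1 < α - 1) hw l
  have hint_zero := integrableOn_stretchedExp hα (by norm_num : (-1 : ℝ) < 0) hw l
  have hderiv : ∀ s ∈ Ioi (0 : ℝ), HasDerivAt (stretchedExp α 0 w l) _ s :=
    fun s hs => hasDerivAt_stretchedExp_zero α w l hs
  have hint := (hint_pow.const_mul (-(α * w))).sub (hint_zero.const_mul l)
  have hlim := tendsto_zero_of_hasDerivAt_of_integrableOn_Ioi hderiv hint hint_zero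
  have hcont : Continuous (stretchedExp α 0 w l) := by
    have : Continuous fun s : ℝ => s ^ α := Real.continuous_rpow_const (by positivity)
    unfold stretchedExp
    simp only [Real.rpow_zero]
    fun_prop
  have hftc := integral_Ioi_of_hasDerivAt_of_tendsto hcont.continuousWithinAt hderiv hint hlim
  have hstart : stretchedExp α 0 w l 0 = 1 := by
    simp [stretchedExp, Real.zero_rpow (by positivity : α ≠ 0)]
  rw [integral_sub (hint_pow.const_mul (-(α * w))) (hint_zero.const_mul l),
    integral_const_mul, integral_const_mul, hstart] at hftc
  simp only [stretchedLaplace]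
  linear_combination -hftc

end StretchedExp

section Rotation

variable {α k : ℝ} {w l : ℂ}

lemma logStretchedExp_add_mul_I (α k : ℝ) (w l : ℂ) (η x : ℝ) :
    logStretchedExp α k w l (x + η * I) = Complex.exp ((k + 1) * η * I) * (Real.exp x •
      stretchedExp α k (w * Complex.exp (α * η * I)) (l * Complex.exp (η * I)) (Real.exp x)) := by
  rw [logStretchedExp, stretchedExp, ← Real.exp_mul, ← Real.exp_mul, Complex.real_smul]
  push_cast
  rw [← Complex.exp_add, ← Complex.exp_add, ← Complex.exp_add]
  congr 1
  rw [mul_add (α : ℂ), Complex.exp_add, Complex.exp_add]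
  ring_nf

lemma integral_logStretchedExp (α k : ℝ) (w l : ℂ) (η : ℝ) :
    ∫ x : ℝ, logStretchedExp α k w l (x + η * I) = Complex.exp ((k + 1) * η * I) *
      stretchedLaplace α k (w * Complex.exp (α * η * I)) (l * Complex.exp (η * I)) := by
  simp only [logStretchedExp_add_mul_I]
  rw [integral_const_mul, integral_comp_exp, stretchedLaplace]

lemma integrable_logStretchedExp (hα : 1 < α) (hk : -1 < k) (l : ℂ) {η : ℝ}
    (hw : 0 < (w * Complex.exp (α * η * I)).re) :
    Integrable fun x : ℝ => logStretchedExp α k w l (x + η * I) := by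
  simp only [logStretchedExp_add_mul_I]
  exact ((integrable_comp_exp_iff _).2 (integrableOn_stretchedExp hα hk hw _)).const_mul _

lemma norm_logStretchedExp_add_mul_I_le (α k : ℝ) {a η : ℝ}
    (ha : a ≤ (w * Complex.exp (α * η * I)).re) (l : ℂ) (x : ℝ) :
    ‖logStretchedExp α k w l (x + η * I)‖ ≤ ‖logStretchedExp α k a (-‖l‖) (x + (0 : ℝ) * I)‖ := by
  have hl : ‖l‖ = ‖l * Complex.exp (η * I)‖ := by simp [Complex.norm_exp_ofReal_mul_I]
  have hphase (η : ℝ) : ‖Complex.exp ((k + 1) * η * I)‖ = 1 := by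
    exact_mod_cast Complex.norm_exp_ofReal_mul_I ((k + 1) * η)
  rw [logStretchedExp_add_mul_I, logStretchedExp_add_mul_I, norm_mul, norm_mul, norm_smul,
    norm_smul, hphase, hphase, norm_stretchedExp _ _ _ _ (Real.exp_pos x).le,
    norm_stretchedExp _ _ _ _ (Real.exp_pos x).le]
  simp only [Complex.ofReal_zero, mul_zero, zero_mul, Complex.exp_zero, mul_one, Complex.neg_re,
    Complex.ofReal_re, neg_neg]
  gcongr
  exact (neg_le_abs _).trans ((Complex.abs_re_le_norm _).trans hl.ge)

lemma hasDerivAt_logStretchedExp (α k : ℝ) (w l ζ : ℂ) :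
    HasDerivAt (logStretchedExp α k w l) ((k + 1) * logStretchedExp α k w l ζ
      - α * w * logStretchedExp α (k + α) w l ζ - l * logStretchedExp α (k + 1) w l ζ) ζ := by
  have hshift (m : ℝ) : logStretchedExp α (k + m) w l ζ =
      Complex.exp (m * ζ) * logStretchedExp α k w l ζ := by
    rw [logStretchedExp, logStretchedExp, ← Complex.exp_add]
    push_cast
    ring_nf
  have hlin (m : ℂ) : HasDerivAt (fun ζ : ℂ => m * ζ) m ζ := by
    simpa using (hasDerivAt_id ζ).const_mul m
  have hexp := (((hlin (k + 1)).sub ((hlin α).cexp.const_mul w)).sub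
    ((Complex.hasDerivAt_exp ζ).const_mul l)).cexp
  convert! hexp using 1
  rw [hshift, hshift]
  simp only [logStretchedExp, Pi.sub_apply, Complex.ofReal_one, one_mul]
  ring

lemma norm_deriv_logStretchedExp_le (α k : ℝ) (w l ζ : ℂ) :
    ‖deriv (logStretchedExp α k w l) ζ‖ ≤ |k + 1| * ‖logStretchedExp α k w l ζ‖
      + |α| * ‖w‖ * ‖logStretchedExp α (k + α) w l ζ‖
      + ‖l‖ * ‖logStretchedExp α (k + 1) w l ζ‖ := by
  rw [(hasDerivAt_logStretchedExp α k w l ζ).deriv]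
  refine norm_sub_le_of_le (norm_sub_le_of_le ?_ ?_) ?_
  · rw [norm_mul, ← Complex.ofReal_one, ← Complex.ofReal_add, Complex.norm_real, Real.norm_eq_abs]
  · rw [norm_mul, norm_mul, Complex.norm_real, Real.norm_eq_abs]
  · rw [norm_mul]

lemma integral_logStretchedExp_eq (hα : 1 < α) (hk : -1 < k) {a : ℝ} (ha : 0 < a) {U : Set ℝ}
    (hU : IsOpen U) (hconn : IsPreconnected U)
    (hw : ∀ η ∈ U, a ≤ (w * Complex.exp (α * η * I)).re) (l : ℂ)
    {η₁ η₂ : ℝ} (h₁ : η₁ ∈ U) (h₂ : η₂ ∈ U) :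
    ∫ x : ℝ, logStretchedExp α k w l (x + η₁ * I) =
      ∫ x : ℝ, logStretchedExp α k w l (x + η₂ * I) := by
  have hmajorant {m : ℝ} (hm : -1 < m) :
      Integrable fun x : ℝ => ‖logStretchedExp α m a (-‖l‖) (x + (0 : ℝ) * I)‖ :=
    (integrable_logStretchedExp hα hm _ (by simpa using ha)).norm
  refine integral_horizontal_line_eq hU hconn
    (fun η _ x => (hasDerivAt_logStretchedExp α k w l _).differentiableAt)
    (fun η hη => integrable_logStretchedExp hα hk l (ha.trans_le (hw η hη)))
    ((((hmajorant hk).const_mul |k + 1|).add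
      ((hmajorant (by linarith : -1 < k + α)).const_mul (|α| * ‖w‖))).add
      ((hmajorant (by linarith : -1 < k + 1)).const_mul ‖l‖))
    (fun η hη x => (norm_deriv_logStretchedExp_le α k w l _).trans ?_) h₁ h₂
  simp only [Pi.add_apply]
  gcongr <;> exact norm_logStretchedExp_add_mul_I_le α _ (hw η hη) l x

lemma re_mul_exp_mul_I (w : ℂ) (φ : ℝ) :
    (w * Complex.exp (φ * I)).re = ‖w‖ * Real.cos (w.arg + φ) := by
  conv_lhs => rw [← Complex.norm_mul_exp_arg_mul_I w]
  rw [mul_assoc, ← Complex.exp_add, ← add_mul, ← Complex.ofReal_add, Complex.re_ofReal_mul,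
    Complex.exp_ofReal_mul_I_re]

/-- Cauchy's theorem on the sector swept by the rotation `s ↦ s * exp (i η)`. -/
theorem stretchedLaplace_eq_rotate (hα : 1 < α) (hk : -1 < k) (hw : 0 < w.re) (l : ℂ) {η : ℝ}
    (hη : |w.arg + α * η| < Real.pi / 2) :
    stretchedLaplace α k w l = Complex.exp ((k + 1) * η * I) *
      stretchedLaplace α k (w * Complex.exp (α * η * I)) (l * Complex.exp (η * I)) := by
  have hα0 : 0 < α := by linarith
  have hw0 : 0 < ‖w‖ := norm_pos_iff.2 (Complex.ne_zero_of_re_pos hw)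
  have harg : |w.arg| < Real.pi / 2 := Complex.abs_arg_lt_pi_div_two_iff.2 (Or.inl hw)
  obtain ⟨ρ, hρ, hρπ⟩ := exists_between (max_lt harg hη)
  have hρ0 : 0 < ρ := (abs_nonneg _).trans_lt ((le_max_left _ _).trans_lt hρ)
  have hcos : 0 < Real.cos ρ := Real.cos_pos_of_mem_Ioo ⟨by linarith, hρπ⟩
  have hmem (η : ℝ) : η ∈ Metric.ball (-w.arg / α) (ρ / α) ↔ |w.arg + α * η| < ρ := by
    rw [Metric.mem_ball, Real.dist_eq, lt_div_iff₀ hα0, ← abs_of_pos hα0, ← abs_mul,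
      abs_of_pos hα0]
    congr! 2
    field_simp
    ring
  have hre : ∀ η ∈ Metric.ball (-w.arg / α) (ρ / α),
      ‖w‖ * Real.cos ρ ≤ (w * Complex.exp (α * η * I)).re := by
    intro η hη
    rw [← Complex.ofReal_mul, re_mul_exp_mul_I, ← Real.cos_abs (w.arg + α * η)]
    gcongr
    exact Real.cos_le_cos_of_nonneg_of_le_pi (abs_nonneg _) (by linarith) ((hmem η).1 hη).le
  have hshift := integral_logStretchedExp_eq hα hk (mul_pos hw0 hcos) Metric.isOpen_ball
    (convex_ball _ _).isPreconnected hre l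
    ((hmem 0).2 (by simpa using (le_max_left _ _).trans_lt hρ))
    ((hmem η).2 ((le_max_right _ _).trans_lt hρ))
  rw [integral_logStretchedExp, integral_logStretchedExp] at hshift
  simpa using hshift

end Rotation

section LaplaceValues

variable {α k : ℝ} {w l : ℂ}

theorem stretchedLaplace_zero_right (hα : 1 < α) (hk : -1 < k) (hw : 0 < w.re) :
    stretchedLaplace α k w 0 =
      w ^ ((-((k + 1) / α) : ℝ) : ℂ) * (Real.Gamma ((k + 1) / α) / α : ℝ) := by
  have hα0 : α ≠ 0 := by positivity
  have hαC : (α : ℂ) ≠ 0 := Complex.ofReal_ne_zero.2 hα0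
  have hw0 : w ≠ 0 := Complex.ne_zero_of_re_pos hw
  have hreal : stretchedLaplace α k ‖w‖ 0 =
      (‖w‖ ^ (-((k + 1) / α)) * (Real.Gamma ((k + 1) / α) / α) : ℝ) := by
    have hgamma := integral_rpow_mul_exp_neg_mul_rpow (by positivity : 0 < α) hk
      (norm_pos_iff.2 hw0)
    rw [show ‖w‖ ^ (-((k + 1) / α)) * (Real.Gamma ((k + 1) / α) / α) =
        ∫ s in Ioi 0, s ^ k * Real.exp (-‖w‖ * s ^ α) by rw [hgamma, neg_div]; ring,
      ← integral_complex_ofReal]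
    simp [stretchedLaplace, stretchedExp]
  have hunrotate : w * Complex.exp (α * (-w.arg / α : ℝ) * I) = ‖w‖ := by
    have hphase : (α * (-w.arg / α : ℝ) * I : ℂ) = -(w.arg * I) := by
      push_cast
      field_simp
    rw [hphase]
    conv_lhs => enter [1]; rw [← Complex.norm_mul_exp_arg_mul_I w]
    rw [mul_assoc, ← Complex.exp_add, add_neg_cancel, Complex.exp_zero, mul_one]
  rw [stretchedLaplace_eq_rotate hα hk hw 0 (η := -w.arg / α)
    (by rw [mul_div_cancel₀ _ hα0, add_neg_cancel, abs_zero]; positivity), hunrotate, zero_mul,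
    hreal, Complex.ofReal_mul, ← mul_assoc]
  congr 1
  have hphase : ((k + 1) * (-w.arg / α : ℝ) * I : ℂ) = (w.arg * -((k + 1) / α) : ℝ) * I := by
    push_cast
    ring
  rw [Complex.cpow_ofReal, hphase, Complex.exp_mul_I, Complex.ofReal_cos, Complex.ofReal_sin,
    mul_comm]

lemma mul_stretchedLaplace_sub_two (hα : 1 < α) (hw : 0 < w.re) :
    α * w * stretchedLaplace α (α - 2) w 0 =
      w ^ ((1 / α : ℝ) : ℂ) * (Real.Gamma (1 - 1 / α) : ℝ) := by
  have hα0 : α ≠ 0 := by positivity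
  have hαC : (α : ℂ) ≠ 0 := Complex.ofReal_ne_zero.2 hα0
  have hw0 : w ≠ 0 := Complex.ne_zero_of_re_pos hw
  have hexp : (α - 2 + 1) / α = 1 - 1 / α := by
    field_simp
    ring
  have hpow : w ^ ((1 / α : ℝ) : ℂ) = w * w ^ ((-(1 - 1 / α) : ℝ) : ℂ) := by
    rw [show ((1 / α : ℝ) : ℂ) = 1 + (-(1 - 1 / α) : ℝ) by push_cast; ring,
      Complex.cpow_add _ _ hw0, Complex.cpow_one]
  rw [stretchedLaplace_zero_right hα (by linarith) hw, hexp, hpow, Complex.ofReal_div]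
  field_simp

lemma integrable_uncurry_stretchedExp (hα : 1 < α) (hk : -1 < k) (hw : 0 < w.re) (hl : 0 < l.re) :
    Integrable (Function.uncurry fun x s : ℝ => stretchedExp α (k + 1) w (x * l) s)
      ((volume.restrict (Ioi 0)).prod (volume.restrict (Ioi 0))) := by
  have hneg {s : ℝ} (hs : 0 < s) : (-(l * s)).re < 0 := by simpa using mul_pos hl hs
  have hmeas : Measurable
      (Function.uncurry fun x s : ℝ => stretchedExp α (k + 1) w (x * l) s) := by
    unfold stretchedExp Function.uncurry
    fun_prop
  refine (integrable_prod_iff' hmeas.aestronglyMeasurable).2 ⟨?_, ?_⟩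
  · filter_upwards [ae_restrict_mem measurableSet_Ioi] with s (hs : 0 < s)
    simp only [Function.uncurry_apply_pair, stretchedExp_add_one_ofReal_mul α k w l _ hs]
    exact (integrableOn_exp_mul_complex_Ioi (hneg hs) 0).const_mul _
  · refine ((integrableOn_stretchedExp hα hk hw 0).norm.const_mul l.re⁻¹).congr ?_
    filter_upwards [ae_restrict_mem measurableSet_Ioi] with s (hs : 0 < s)
    have hnorm (x : ℝ) : ‖Complex.exp (-(l * s) * x)‖ = Real.exp ((-(l * s)).re * x) := by
      rw [Complex.norm_exp, Complex.re_mul_ofReal]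
    simp only [Function.uncurry_apply_pair, stretchedExp_add_one_ofReal_mul α k w l _ hs, norm_mul,
      hnorm]
    rw [integral_const_mul, integral_exp_mul_Ioi (hneg hs), Complex.norm_of_nonneg hs.le,
      mul_zero, Real.exp_zero, Complex.neg_re, Complex.re_mul_ofReal]
    field_simp

lemma integrableOn_stretchedLaplace (hα : 1 < α) (hk : -1 < k) (hw : 0 < w.re) (hl : 0 < l.re) :
    IntegrableOn (fun x : ℝ => stretchedLaplace α (k + 1) w (x * l)) (Ioi 0) :=
  (integrable_uncurry_stretchedExp hα hk hw hl).integral_prod_left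

lemma integral_stretchedLaplace (hα : 1 < α) (hk : -1 < k) (hw : 0 < w.re) (hl : 0 < l.re) :
    ∫ x : ℝ in Ioi 0, stretchedLaplace α (k + 1) w (x * l) = l⁻¹ * stretchedLaplace α k w 0 := by
  simp only [stretchedLaplace]
  rw [integral_integral_swap (integrable_uncurry_stretchedExp hα hk hw hl), ← integral_const_mul]
  refine setIntegral_congr_fun measurableSet_Ioi fun s (hs : 0 < s) => ?_
  have hs0 : (s : ℂ) ≠ 0 := Complex.ofReal_ne_zero.2 hs.ne'
  have hneg : (-(l * s)).re < 0 := by simpa using mul_pos hl hs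
  calc ∫ x : ℝ in Ioi 0, stretchedExp α (k + 1) w (x * l) s
      = ∫ x : ℝ in Ioi 0, s * stretchedExp α k w 0 s * Complex.exp (-(l * s) * x) := by
        simp only [stretchedExp_add_one_ofReal_mul α k w l _ hs]
    _ = s * stretchedExp α k w 0 s * (l * s)⁻¹ := by
        rw [integral_const_mul, integral_exp_mul_complex_Ioi hneg]
        simp
    _ = l⁻¹ * stretchedExp α k w 0 s := by field_simp

lemma exists_rotate_into_right_half_plane (hw : 0 < w.re) (α : ℝ) :
    ∃ η : ℝ, |w.arg + α * η| < Real.pi / 2 ∧ 0 < (I * Complex.exp (η * I)).re := by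
  have hcont : ContinuousAt (fun η : ℝ => |w.arg + α * η|) 0 := by fun_prop
  have harg : |w.arg| < Real.pi / 2 := Complex.abs_arg_lt_pi_div_two_iff.2 (Or.inl hw)
  have hsmall : ∀ᶠ η : ℝ in 𝓝[<] 0, |w.arg + α * η| < Real.pi / 2 :=
    nhdsWithin_le_nhds (hcont.eventually_lt_const (by simpa using harg))
  have hIoo : ∀ᶠ η : ℝ in 𝓝[<] 0, η ∈ Ioo (-Real.pi) 0 :=
    Ioo_mem_nhdsLT (neg_neg_of_pos Real.pi_pos)
  obtain ⟨η, hη, hlower, hupper⟩ := (hsmall.and hIoo).exists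
  refine ⟨η, hη, ?_⟩
  rw [Complex.I_mul_re, Complex.exp_ofReal_mul_I_im]
  exact neg_pos.2 (Real.sin_neg_of_neg_of_neg_pi_lt hupper hlower)

/-- On the imaginary axis the double integral does not converge absolutely; rotating the half-line
of integration moves `x * I` into the right half-plane. -/
theorem integral_stretchedLaplace_mul_I (hα : 1 < α) (hk : -1 < k) (hw : 0 < w.re) :
    IntegrableOn (fun x : ℝ => stretchedLaplace α (k + 1) w (x * I)) (Ioi 0) ∧
      ∫ x : ℝ in Ioi 0, stretchedLaplace α (k + 1) w (x * I) = -I * stretchedLaplace α k w 0 := by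
  obtain ⟨η, hη, hl⟩ := exists_rotate_into_right_half_plane hw α
  have hw' : 0 < (w * Complex.exp (α * η * I)).re := by
    have hnorm : 0 < ‖w‖ := norm_pos_iff.2 (Complex.ne_zero_of_re_pos hw)
    rw [← Complex.ofReal_mul, re_mul_exp_mul_I]
    exact mul_pos hnorm (Real.cos_pos_of_mem_Ioo (abs_lt.1 hη))
  have hrotate (x : ℝ) := stretchedLaplace_eq_rotate hα (by linarith : -1 < k + 1) hw (x * I) hη
  simp only [hrotate, mul_assoc (_ : ℂ) I]
  refine ⟨(integrableOn_stretchedLaplace hα hk hw' hl).const_mul _, ?_⟩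
  rw [integral_const_mul, integral_stretchedLaplace hα hk hw' hl,
    stretchedLaplace_eq_rotate hα hk hw 0 hη, zero_mul]
  have hphase : Complex.exp (((k + 1 : ℝ) + 1) * η * I) =
      Complex.exp ((k + 1) * η * I) * Complex.exp (η * I) := by
    rw [← Complex.exp_add]
    push_cast
    ring_nf
  rw [hphase, mul_inv, Complex.inv_I]
  field_simp

theorem integral_mul_re_stretchedLaplace (hα : 1 < α) (hw : 0 < w.re) :
    IntegrableOn (fun x : ℝ => x * (stretchedLaplace α 0 w (x * I)).re) (Ioi 0) ∧
      ∫ x : ℝ in Ioi 0, x * (stretchedLaplace α 0 w (x * I)).re =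
        ‖w‖ ^ (1 / α) * Real.Gamma (1 - 1 / α) * Real.cos (w.arg / α) := by
  have hparts (x : ℝ) : x * (stretchedLaplace α 0 w (x * I)).re =
      (I * (α * w) * stretchedLaplace α (α - 2 + 1) w (x * I)).re := by
    have hcomplex : x * stretchedLaplace α 0 w (x * I) =
        -I + I * (α * w) * stretchedLaplace α (α - 1) w (x * I) := by
      linear_combination (-I) * mul_stretchedLaplace_zero hα hw (x * I) +
        x * stretchedLaplace α 0 w (x * I) * Complex.I_mul_I
    rw [← Complex.re_ofReal_mul, hcomplex, Complex.add_re, Complex.neg_re, Complex.I_re,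
      neg_zero, zero_add, show α - 2 + 1 = α - 1 by ring]
  obtain ⟨hint, hval⟩ := integral_stretchedLaplace_mul_I hα (by linarith : -1 < α - 2) hw
  have hint' := hint.const_mul (I * (α * w))
  have hcancel (z : ℂ) : I * (α * w) * (-I * z) = α * w * z := by
    linear_combination -(α * w * z) * Complex.I_mul_I
  simp only [hparts]
  refine ⟨hint'.re, ?_⟩
  have hre := integral_re hint'
  simp only [RCLike.re_eq_complex_re] at hre
  rw [hre, integral_const_mul, hval, hcancel, mul_stretchedLaplace_sub_two hα hw,
    Complex.re_mul_ofReal, Complex.cpow_ofReal_re]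
  ring_nf

end LaplaceValues

section StableDensity

variable {α γ t : ℝ}

/-- The coefficient of `θ ^ α` in `t * ψ(θ)` for `θ > 0`, where `ψ` is `stableExponent`. On that
half-line the integrand of `stableDensity` is the real part of a `stretchedExp` with this
coefficient. -/
noncomputable def stableCoeff (γ t : ℝ) : ℂ :=
  t * Complex.exp ((Real.pi * γ / 2 : ℝ) * I)

lemma norm_stableCoeff (γ : ℝ) (ht : 0 < t) : ‖stableCoeff γ t‖ = t := by
  rw [stableCoeff, norm_mul, Complex.norm_exp_ofReal_mul_I, Complex.norm_of_nonneg ht.le, mul_one]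

lemma arg_stableCoeff (hγ : |γ| < 1) (ht : 0 < t) : (stableCoeff γ t).arg = Real.pi * γ / 2 := by
  obtain ⟨hlower, hupper⟩ := abs_lt.1 hγ
  have hpi := Real.pi_pos
  rw [stableCoeff, Complex.arg_real_mul _ ht, Complex.arg_exp_mul_I, toIocMod_eq_self]
  constructor <;> nlinarith

lemma stableCoeff_re_pos (hγ : |γ| < 1) (ht : 0 < t) : 0 < (stableCoeff γ t).re := by
  obtain ⟨hlower, hupper⟩ := abs_lt.1 hγ
  have hpi := Real.pi_pos
  rw [stableCoeff, Complex.re_ofReal_mul, Complex.exp_ofReal_mul_I_re]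
  exact mul_pos ht (Real.cos_pos_of_mem_Ioo ⟨by nlinarith, by nlinarith⟩)

lemma stableExponent_neg (α γ θ : ℝ) : stableExponent α γ (-θ) = stableExponent α (-γ) θ := by
  simp only [stableExponent, Real.sign_neg, abs_neg]
  push_cast
  ring_nf

lemma conj_stableExponent (α γ θ : ℝ) :
    (starRingEnd ℂ) (stableExponent α γ θ) = stableExponent α (-γ) θ := by
  simp only [stableExponent, map_mul, ← Complex.exp_conj, Complex.conj_I, Complex.conj_ofReal,
    map_div₀, Complex.conj_ofNat]
  push_cast
  ring_nf

lemma stableDensity_neg (α γ t x : ℝ) : stableDensity α γ t (-x) = stableDensity α (-γ) t x := by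
  rw [stableDensity, stableDensity, ← integral_neg_eq_self]
  congr! 4 with θ
  rw [stableExponent_neg]
  push_cast
  ring_nf

lemma stableDensity_eq_re_stretchedLaplace (hα : 1 < α) (hγ : |γ| < 1) (ht : 0 < t) (x : ℝ) :
    stableDensity α γ t x =
      Real.pi⁻¹ * (stretchedLaplace α 0 (stableCoeff γ t) (x * I)).re := by
  set f : ℝ → ℝ := fun θ => (Complex.exp (-t * stableExponent α γ θ - I * θ * x)).re with hf
  have heven (θ : ℝ) : f (-θ) = f θ := by
    simp only [hf]
    rw [← Complex.conj_re, ← Complex.exp_conj]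
    simp only [map_sub, map_mul, map_neg, Complex.conj_ofReal, Complex.conj_I,
      conj_stableExponent, stableExponent_neg, neg_neg]
    push_cast
    ring_nf
  have habs (θ : ℝ) : f θ = f |θ| := by
    rcases abs_choice θ with h | h <;> simp only [h, heven]
  have hpos : ∀ θ ∈ Ioi (0 : ℝ), f θ = (stretchedExp α 0 (stableCoeff γ t) (x * I) θ).re := by
    intro θ (hθ : 0 < θ)
    simp only [hf, stableCoeff, stretchedExp, stableExponent, Real.sign_of_pos hθ, abs_of_pos hθ]
    push_cast
    rw [Real.rpow_zero, Complex.ofReal_one, one_mul]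
    ring_nf
  have hre := integral_re (integrableOn_stretchedExp hα (by norm_num : (-1 : ℝ) < 0)
    (stableCoeff_re_pos hγ ht) (x * I))
  simp only [RCLike.re_eq_complex_re] at hre
  rw [stableDensity, stretchedLaplace, ← hre, ← setIntegral_congr_fun measurableSet_Ioi hpos,
    integral_congr_ae (Eventually.of_forall habs), integral_comp_abs]
  field_simp

theorem integral_mul_stableDensity (hα : 1 < α) (hγ : |γ| < 1) (ht : 0 < t) :
    IntegrableOn (fun x => x * stableDensity α γ t x) (Ioi 0) ∧
      ∫ x in Ioi 0, x * stableDensity α γ t x =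
        t ^ (1 / α) / Real.pi * Real.Gamma (1 - 1 / α) * Real.cos (Real.pi * γ / (2 * α)) := by
  obtain ⟨hint, hval⟩ := integral_mul_re_stretchedLaplace hα (stableCoeff_re_pos hγ ht)
  simp only [stableDensity_eq_re_stretchedLaplace hα hγ ht, mul_left_comm _ Real.pi⁻¹]
  refine ⟨hint.const_mul _, ?_⟩
  rw [integral_const_mul, hval, norm_stableCoeff γ ht, arg_stableCoeff hγ ht, div_div]
  ring

end StableDensity

theorem stmt4_general (α γ t : ℝ) (hα : 1 < α) (hγ : |γ| < 1) (ht : 0 < t) :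
    ∫ x : ℝ, stableDensity α γ t x * |x| =
      (2 * t ^ (1 / α) / Real.pi) * Real.Gamma (1 - 1 / α) *
        Real.sin (Real.pi * (α - γ) / (2 * α)) := by
  obtain ⟨hint_pos, hval_pos⟩ := integral_mul_stableDensity hα hγ ht
  obtain ⟨hint_neg, hval_neg⟩ := integral_mul_stableDensity hα ((abs_neg γ).trans_lt hγ) ht
  simp only [← stableDensity_neg] at hint_neg hval_neg
  have hcos_neg : Real.cos (Real.pi * -γ / (2 * α)) = Real.cos (Real.pi * γ / (2 * α)) := by
    rw [mul_neg, neg_div, Real.cos_neg]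
  have hsin : Real.sin (Real.pi * (α - γ) / (2 * α)) = Real.cos (Real.pi * γ / (2 * α)) := by
    rw [← Real.sin_pi_div_two_sub]
    congr 1
    field_simp
  rw [integral_mul_abs_eq_add hint_pos hint_neg, hval_pos, hval_neg, hcos_neg, hsin]
  ring

/-- First absolute moment of the stable density:
`∫ 𝔭_t(x) |x| dx = (2 t^{1/α}/π) Γ(1 − 1/α) sin(π(α−γ)/(2α))`. -/
theorem stmt4 (α γ t : ℝ) (hα : 1 < α) (hα2 : α < 2) (hγ : |γ| ≤ 2 - α) (ht : 0 < t) :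
    ∫ x : ℝ, stableDensity α γ t x * |x| =
      (2 * t ^ (1 / α) / Real.pi) * Real.Gamma (1 - 1 / α) *
        Real.sin (Real.pi * (α - γ) / (2 * α)) :=
  stmt4_general α γ t hα (by linarith) ht
end

section
/- Let 𝔭_t(x) be the density of a strictly stable process of index α ∈ (1,2). For every continuous function φ on [0,T], lim_{y→0+} ∫₀^T [(𝔭_t(y) − 𝔭_t(0))/y^{α−1}]·φ(t) dt = b⁺·φ(0), where b⁺ = α·∫₀^∞ (𝔭₁(u) − 𝔭₁(0))/u^α du, and the analogous statement holds as y → 0− with b⁻ = α·∫₀^∞ (𝔭₁(−u) − 𝔭₁(0))/u^α du. -/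
open Filter Topology

/-!
For `y > 0`, self-similarity turns the kernel `(𝔭_t(y) − 𝔭_t(0)) / y^(α−1)` into the dilation
`ε⁻¹ k(ε⁻¹ t)`, `ε = y^α`, of the fixed function `k(t) = 𝔭_t(1) − 𝔭_t(0)`. Since
`k(t) = t^(-1/α) (𝔭₁(t^(-1/α)) − 𝔭₁(0))`, boundedness of `𝔭₁` gives `k(t) = O(t^(-1/α))` at `0`
and its Lipschitz continuity gives `k(t) = O(t^(-2/α))` at `∞`, so `k` is integrable for
`1 < α < 2`. The kernels thus form a (signed) approximate identity on `(0, ∞)` of total mass `∫ k`,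
which the substitution `t = u^(-α)` identifies with `b⁺`. The limit from the left is the same
statement for the reflected densities.
-/

open MeasureTheory Set
open scoped NNReal

section ApproximateIdentity

variable {E : Type*} [NormedAddCommGroup E] [NormedSpace ℝ E] [CompleteSpace E]
  {k : ℝ → ℝ} {φ : ℝ → E} {l : E} {M : ℝ}

lemma tendsto_setIntegral_Ioi_smul_comp_mul_left (hk : IntegrableOn k (Ioi 0))
    (hφ : AEStronglyMeasurable φ (volume.restrict (Ioi 0))) (hM : ∀ t > 0, ‖φ t‖ ≤ M)
    (hl : Tendsto φ (𝓝[>] 0) (𝓝 l)) :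
    Tendsto (fun ε : ℝ => ∫ s in Ioi 0, k s • φ (ε * s)) (𝓝[>] 0)
      (𝓝 ((∫ s in Ioi 0, k s) • l)) := by
  have dilation_quasiMeasurePreserving (ε : ℝ) (hε : 0 < ε) :
      Measure.QuasiMeasurePreserving (ε * ·) (volume.restrict (Ioi 0))
        (volume.restrict (Ioi 0)) :=
    (Measure.quasiMeasurePreserving_smul volume hε.ne').restrict fun _ hs => mul_pos hε hs
  rw [← integral_smul_const]
  refine tendsto_integral_filter_of_dominated_convergence (fun s => ‖k s‖ * M) ?_ ?_
    (hk.norm.mul_const M) ?_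
  · filter_upwards [self_mem_nhdsWithin] with ε hε
    exact hk.aestronglyMeasurable.smul
      (hφ.comp_quasiMeasurePreserving (dilation_quasiMeasurePreserving ε hε))
  · filter_upwards [self_mem_nhdsWithin] with ε hε
    filter_upwards [ae_restrict_mem measurableSet_Ioi] with s hs
    rw [norm_smul]
    exact mul_le_mul_of_nonneg_left (hM _ (mul_pos hε hs)) (norm_nonneg _)
  · filter_upwards [ae_restrict_mem measurableSet_Ioi] with s (hs : 0 < s)
    have mul_tendsto : Tendsto (· * s) (𝓝[>] 0) (𝓝[>] 0) := by
      simpa only [zero_mul, id_eq] using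
        TendstoNhdsWithinIoi.mul_const hs (tendsto_id (x := 𝓝[>] (0 : ℝ)))
    exact (hl.comp mul_tendsto).const_smul (k s)

lemma tendsto_setIntegral_Ioi_dilation_smul (hk : IntegrableOn k (Ioi 0))
    (hφ : AEStronglyMeasurable φ (volume.restrict (Ioi 0))) (hM : ∀ t > 0, ‖φ t‖ ≤ M)
    (hl : Tendsto φ (𝓝[>] 0) (𝓝 l)) :
    Tendsto (fun ε : ℝ => ∫ t in Ioi 0, (ε⁻¹ * k (ε⁻¹ * t)) • φ t) (𝓝[>] 0)
      (𝓝 ((∫ s in Ioi 0, k s) • l)) := by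
  refine (tendsto_setIntegral_Ioi_smul_comp_mul_left hk hφ hM hl).congr' ?_
  filter_upwards [self_mem_nhdsWithin] with ε (hε : 0 < ε)
  have := integral_comp_mul_left_Ioi (fun t => k (ε⁻¹ * t) • φ t) 0 hε
  simpa only [inv_mul_cancel_left₀ hε.ne', mul_zero, ← integral_smul, ← mul_smul] using this

lemma tendsto_intervalIntegral_dilation_smul {T : ℝ} (hT : 0 < T)
    (hk : IntegrableOn k (Ioi 0))
    (hφ : AEStronglyMeasurable φ (volume.restrict (Ioc 0 T))) (hM : ∀ t ∈ Ioc 0 T, ‖φ t‖ ≤ M)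
    (hl : Tendsto φ (𝓝[>] 0) (𝓝 l)) :
    Tendsto (fun ε : ℝ => ∫ t in (0 : ℝ)..T, (ε⁻¹ * k (ε⁻¹ * t)) • φ t) (𝓝[>] 0)
      (𝓝 ((∫ s in Ioi 0, k s) • l)) := by
  have indicator_bound (t : ℝ) (_ : t > 0) : ‖(Ioc 0 T).indicator φ t‖ ≤ M := by
    by_cases ht : t ∈ Ioc 0 T
    · simpa only [indicator_of_mem ht] using hM t ht
    · simpa only [indicator_of_notMem ht, norm_zero] using
        (norm_nonneg _).trans (hM T (right_mem_Ioc.mpr hT))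
  have indicator_tendsto : Tendsto ((Ioc 0 T).indicator φ) (𝓝[>] 0) (𝓝 l) := by
    refine hl.congr' ?_
    filter_upwards [Ioc_mem_nhdsGT hT] with t ht
    rw [indicator_of_mem ht]
  refine (tendsto_setIntegral_Ioi_dilation_smul hk
    ((aestronglyMeasurable_indicator_iff measurableSet_Ioc).mpr hφ).restrict
    indicator_bound indicator_tendsto).congr fun ε => ?_
  simp only [← indicator_smul]
  rw [setIntegral_indicator measurableSet_Ioc, inter_eq_right.mpr Ioc_subset_Ioi_self,
    intervalIntegral.integral_of_le hT.le]

end ApproximateIdentity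

/-- Self-similarity of index `α` for a family `P t x` of one-dimensional densities, the relation
`P_{c^α t}(c x) = c⁻¹ P_t(x)` between the laws of `Y_t` and of `Y_{c^α t} ~ c Y_t`. It is only
required for `t > 0`, where such densities exist. -/
def IsSelfSimilar (α : ℝ) (P : ℝ → ℝ → ℝ) : Prop :=
  ∀ ⦃c t : ℝ⦄, 0 < c → 0 < t → ∀ x, P (c ^ α * t) (c * x) = c⁻¹ * P t x

namespace IsSelfSimilar

variable {α B : ℝ} {L : ℝ≥0} {P : ℝ → ℝ → ℝ}

lemma comp_neg (hP : IsSelfSimilar α P) : IsSelfSimilar α fun t x => P t (-x) :=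
  fun c t hc ht x => by simpa only [mul_neg] using hP hc ht (-x)

lemma eq_rpow_mul (hP : IsSelfSimilar α P) (hα : α ≠ 0) {t : ℝ} (ht : 0 < t) (x : ℝ) :
    P t x = t ^ (-α⁻¹) * P 1 (t ^ (-α⁻¹) * x) := by
  have hc : 0 < t ^ α⁻¹ := Real.rpow_pos_of_pos ht _
  have := hP hc one_pos ((t ^ α⁻¹)⁻¹ * x)
  rwa [mul_inv_cancel_left₀ hc.ne', Real.rpow_inv_rpow ht.le hα, mul_one,
    ← Real.rpow_neg ht.le] at this

lemma increment_eq (hP : IsSelfSimilar α P) (hα : α ≠ 0) {t : ℝ} (ht : 0 < t) :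
    P t 1 - P t 0 = t ^ (-α⁻¹) * (P 1 (t ^ (-α⁻¹)) - P 1 0) := by
  rw [hP.eq_rpow_mul hα ht 1, hP.eq_rpow_mul hα ht 0, mul_one, mul_zero, mul_sub]

lemma increment_isBigO_nhdsGT_zero (hP : IsSelfSimilar α P) (hα : α ≠ 0)
    (hB : ∀ x, |P 1 x| ≤ B) :
    (fun t => P t 1 - P t 0) =O[𝓝[>] 0] fun t => t ^ (-α⁻¹) := by
  refine Asymptotics.IsBigO.of_bound (B + B) ?_
  filter_upwards [self_mem_nhdsWithin] with t ht
  rw [hP.increment_eq hα ht, norm_mul, mul_comm]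
  gcongr
  exact (abs_sub _ _).trans (add_le_add (hB _) (hB 0))

lemma increment_isBigO_atTop (hP : IsSelfSimilar α P) (hα : α ≠ 0)
    (hL : LipschitzWith L (P 1)) :
    (fun t => P t 1 - P t 0) =O[atTop] fun t => t ^ (-(2 * α⁻¹)) := by
  refine Asymptotics.IsBigO.of_bound L ?_
  filter_upwards [eventually_gt_atTop 0] with t ht
  have lipschitz_bound : ‖P 1 (t ^ (-α⁻¹)) - P 1 0‖ ≤ L * ‖t ^ (-α⁻¹)‖ := by
    simpa only [sub_zero] using hL.norm_sub_le (t ^ (-α⁻¹)) 0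
  calc ‖P t 1 - P t 0‖ = ‖t ^ (-α⁻¹)‖ * ‖P 1 (t ^ (-α⁻¹)) - P 1 0‖ := by
        rw [hP.increment_eq hα ht, norm_mul]
    _ ≤ ‖t ^ (-α⁻¹)‖ * (L * ‖t ^ (-α⁻¹)‖) := by gcongr
    _ = L * ‖t ^ (-(2 * α⁻¹))‖ := by
        rw [mul_left_comm, ← norm_mul, ← Real.rpow_add ht]
        ring_nf

lemma integrableOn_increment (hP : IsSelfSimilar α P) (hα : 1 < α) (hα2 : α < 2)
    (hL : LipschitzWith L (P 1)) (hB : ∀ x, |P 1 x| ≤ B) :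
    IntegrableOn (fun t => P t 1 - P t 0) (Ioi 0) := by
  have hα0 : 0 < α := one_pos.trans hα
  have rpow_continuousOn : ContinuousOn (fun t : ℝ => t ^ (-α⁻¹)) (Ioi 0) :=
    continuousOn_id.rpow_const fun t ht => Or.inl (ne_of_gt ht)
  have increment_continuousOn : ContinuousOn (fun t => P t 1 - P t 0) (Ioi 0) :=
    (rpow_continuousOn.mul ((hL.continuous.comp_continuousOn rpow_continuousOn).sub
      continuousOn_const)).congr fun t ht => hP.increment_eq hα0.ne' ht
  have := mellin_convergent_of_isBigO_scalar (s := 1)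
    (increment_continuousOn.locallyIntegrableOn measurableSet_Ioi)
    (hP.increment_isBigO_atTop hα0.ne' hL) (by field_simp; exact hα2)
    (hP.increment_isBigO_nhdsGT_zero hα0.ne' hB) (inv_lt_one_of_one_lt₀ hα)
  simpa only [sub_self, Real.rpow_zero, one_mul] using this

lemma integral_increment (hP : IsSelfSimilar α P) (hα : 0 < α) :
    ∫ t in Ioi 0, (P t 1 - P t 0) = α * ∫ u in Ioi 0, (P 1 u - P 1 0) / u ^ α := by
  rw [← integral_comp_rpow_Ioi _ (neg_ne_zero.mpr hα.ne'), ← integral_const_mul]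
  refine setIntegral_congr_fun measurableSet_Ioi fun u (hu : 0 < u) => ?_
  have rpow_rpow : (u ^ (-α)) ^ (-α⁻¹) = u := by
    rw [← Real.rpow_mul hu.le, neg_mul_neg, mul_inv_cancel₀ hα.ne', Real.rpow_one]
  simp only [smul_eq_mul]
  rw [hP.increment_eq hα.ne' (Real.rpow_pos_of_pos hu _), rpow_rpow, abs_neg, abs_of_pos hα,
    Real.rpow_sub_one hu.ne', Real.rpow_neg hu.le]
  field_simp

lemma increment_div_rpow (hP : IsSelfSimilar α P) {y t : ℝ} (hy : 0 < y) (ht : 0 < t) :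
    (P t y - P t 0) / y ^ (α - 1) =
      (y ^ α)⁻¹ * (P ((y ^ α)⁻¹ * t) 1 - P ((y ^ α)⁻¹ * t) 0) := by
  have hyα : 0 < y ^ α := Real.rpow_pos_of_pos hy _
  have scaling (x : ℝ) : P t (y * x) = y⁻¹ * P ((y ^ α)⁻¹ * t) x := by
    have := hP hy (mul_pos (inv_pos.mpr hyα) ht) x
    rwa [mul_inv_cancel_left₀ hyα.ne'] at this
  have at_one := scaling 1
  have at_zero := scaling 0
  rw [mul_one] at at_one
  rw [mul_zero] at at_zero
  rw [at_one, at_zero, Real.rpow_sub_one hy.ne']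
  field_simp

theorem tendsto_integral_increment_div_mul (hP : IsSelfSimilar α P) (hα : 1 < α) (hα2 : α < 2)
    (hL : LipschitzWith L (P 1)) (hB : ∀ x, |P 1 x| ≤ B) {T l M : ℝ} (hT : 0 < T) {φ : ℝ → ℝ}
    (hφ : AEStronglyMeasurable φ (volume.restrict (Ioc 0 T))) (hM : ∀ t ∈ Ioc 0 T, ‖φ t‖ ≤ M)
    (hl : Tendsto φ (𝓝[>] 0) (𝓝 l)) :
    Tendsto (fun y : ℝ => ∫ t in (0 : ℝ)..T, (P t y - P t 0) / |y| ^ (α - 1) * φ t) (𝓝[>] 0)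
      (𝓝 ((α * ∫ u in Ioi 0, (P 1 u - P 1 0) / u ^ α) * l)) := by
  have hα0 : 0 < α := one_pos.trans hα
  have rpow_tendsto : Tendsto (fun y : ℝ => y ^ α) (𝓝[>] 0) (𝓝[>] 0) := by
    refine tendsto_nhdsWithin_iff.mpr ⟨?_, ?_⟩
    · simpa only [Real.zero_rpow hα0.ne'] using
        ((Real.continuousAt_rpow_const 0 α (Or.inr hα0.le)).tendsto.mono_left nhdsWithin_le_nhds)
    · filter_upwards [self_mem_nhdsWithin] with y hy using Real.rpow_pos_of_pos hy α
  rw [← hP.integral_increment hα0]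
  refine ((tendsto_intervalIntegral_dilation_smul hT
    (hP.integrableOn_increment hα hα2 hL hB) hφ hM hl).comp rpow_tendsto).congr' ?_
  filter_upwards [self_mem_nhdsWithin] with y (hy : 0 < y)
  simp only [Function.comp_apply, intervalIntegral.integral_of_le hT.le, abs_of_pos hy]
  refine setIntegral_congr_fun measurableSet_Ioc fun t ht => ?_
  simp only [smul_eq_mul, hP.increment_div_rpow hy ht.1]

end IsSelfSimilar

section StableExponent

variable {α γ : ℝ}

lemma stableExponent_mul_left {c : ℝ} (hc : 0 < c) (θ : ℝ) :
    stableExponent α γ (c * θ) = ((c ^ α : ℝ) : ℂ) * stableExponent α γ θ := by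
  have sign_mul_left : Real.sign (c * θ) = Real.sign θ := by
    rcases lt_trichotomy θ 0 with h | rfl | h
    · rw [Real.sign_of_neg h, Real.sign_of_neg (mul_neg_of_pos_of_neg hc h)]
    · rw [mul_zero]
    · rw [Real.sign_of_pos h, Real.sign_of_pos (mul_pos hc h)]
  unfold stableExponent
  rw [sign_mul_left, abs_mul, abs_of_pos hc, Real.mul_rpow hc.le (abs_nonneg _)]
  push_cast
  ring

lemma re_stableExponent (hα : α ≠ 0) (θ : ℝ) :
    (stableExponent α γ θ).re = Real.cos (Real.pi * γ / 2) * |θ| ^ α := by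
  have re_exp (s : ℝ) : (Complex.exp (Complex.I * (Real.pi * γ / 2) * s)).re =
      Real.cos (Real.pi * γ / 2 * s) := by
    rw [← Complex.exp_ofReal_mul_I_re]
    push_cast
    ring_nf
  rw [stableExponent, Complex.re_mul_ofReal, re_exp]
  rcases lt_trichotomy θ 0 with h | rfl | h
  · rw [Real.sign_of_neg h, mul_neg_one, Real.cos_neg]
  · rw [abs_zero, Real.zero_rpow hα, mul_zero, mul_zero]
  · rw [Real.sign_of_pos h, mul_one]

lemma measurable_stableExponent : Measurable (stableExponent α γ) := by
  have measurable_sign : Measurable Real.sign :=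
    Measurable.ite measurableSet_Iio measurable_const
      (Measurable.ite measurableSet_Ioi measurable_const measurable_const)
  unfold stableExponent
  fun_prop

end StableExponent

section ExpNegAbsRpow

variable {p b : ℝ}

lemma integrable_abs_rpow_mul_exp_neg_mul_abs_rpow {s : ℝ} (hs : -1 < s) (hp : 0 < p)
    (hb : 0 < b) : Integrable fun θ : ℝ => |θ| ^ s * Real.exp (-b * |θ| ^ p) := by
  refine (integrable_fun_norm_addHaar (E := ℝ) volume
    (f := fun r => r ^ s * Real.exp (-b * r ^ p))).mpr ?_
  simpa using integrableOn_rpow_mul_exp_neg_mul_rpow hs hp hb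

lemma integrable_exp_neg_mul_abs_rpow (hp : 0 < p) (hb : 0 < b) :
    Integrable fun θ : ℝ => Real.exp (-b * |θ| ^ p) := by
  simpa using integrable_abs_rpow_mul_exp_neg_mul_abs_rpow neg_one_lt_zero hp hb

end ExpNegAbsRpow

/-- The complex integrand `e^{-tψ(θ) - iθx}` of the Fourier inversion formula for `𝔭_t(x)`. -/
noncomputable def stableFourierKernel (α γ t x θ : ℝ) : ℂ :=
  Complex.exp (-(t : ℂ) * stableExponent α γ θ - Complex.I * θ * x)

section StableFourierKernel

variable {α γ t : ℝ}

lemma norm_stableFourierKernel (hα : α ≠ 0) (x θ : ℝ) :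
    ‖stableFourierKernel α γ t x θ‖ =
      Real.exp (-(t * Real.cos (Real.pi * γ / 2)) * |θ| ^ α) := by
  have re_exponent : (-(t : ℂ) * stableExponent α γ θ - Complex.I * θ * x).re =
      -(t * (stableExponent α γ θ).re) := by
    simp
  rw [stableFourierKernel, Complex.norm_exp, re_exponent, re_stableExponent hα, neg_mul, mul_assoc]

lemma norm_stableFourierKernel_sub_le (hα : α ≠ 0) (x y θ : ℝ) :
    ‖stableFourierKernel α γ t x θ - stableFourierKernel α γ t y θ‖ ≤
      |θ| ^ (1 : ℝ) * Real.exp (-(t * Real.cos (Real.pi * γ / 2)) * |θ| ^ α) * |x - y| := by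
  have factorization : stableFourierKernel α γ t x θ - stableFourierKernel α γ t y θ =
      stableFourierKernel α γ t y θ *
        (Complex.exp (Complex.I * ((-θ * (x - y) : ℝ) : ℂ)) - 1) := by
    unfold stableFourierKernel
    rw [mul_sub, ← Complex.exp_add, mul_one]
    push_cast
    ring_nf
  calc ‖stableFourierKernel α γ t x θ - stableFourierKernel α γ t y θ‖
      ≤ Real.exp (-(t * Real.cos (Real.pi * γ / 2)) * |θ| ^ α) * ‖-θ * (x - y)‖ := by
        rw [factorization, norm_mul, norm_stableFourierKernel hα]
        gcongr
        exact Real.norm_exp_I_mul_ofReal_sub_one_le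
    _ = |θ| ^ (1 : ℝ) * Real.exp (-(t * Real.cos (Real.pi * γ / 2)) * |θ| ^ α) * |x - y| := by
        rw [Real.norm_eq_abs, abs_mul, abs_neg, Real.rpow_one]
        ring

lemma integrable_stableFourierKernel (hα : 0 < α) (hγ : 0 < Real.cos (Real.pi * γ / 2))
    (ht : 0 < t) (x : ℝ) : Integrable (stableFourierKernel α γ t x) := by
  have kernel_measurable : Measurable (stableFourierKernel α γ t x) := by
    have := measurable_stableExponent (α := α) (γ := γ)
    unfold stableFourierKernel
    fun_prop
  exact (integrable_exp_neg_mul_abs_rpow hα (mul_pos ht hγ)).mono'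
    kernel_measurable.aestronglyMeasurable
    (.of_forall fun θ => (norm_stableFourierKernel hα.ne' x θ).le)

lemma stableFourierKernel_mul {c : ℝ} (hc : 0 < c) (x θ : ℝ) :
    stableFourierKernel α γ (c ^ α * t) (c * x) θ = stableFourierKernel α γ t x (c * θ) := by
  unfold stableFourierKernel
  rw [stableExponent_mul_left hc]
  push_cast
  ring_nf

end StableFourierKernel

section StableDensity

variable {α γ t : ℝ}

lemma stableDensity_eq_integral_re (x : ℝ) :
    stableDensity α γ t x = 1 / (2 * Real.pi) * ∫ θ, (stableFourierKernel α γ t x θ).re :=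
  rfl

lemma isSelfSimilar_stableDensity : IsSelfSimilar α (stableDensity α γ) := by
  intro c t hc _ x
  simp only [stableDensity_eq_integral_re, stableFourierKernel_mul hc]
  rw [Measure.integral_comp_mul_left (fun θ => (stableFourierKernel α γ t x θ).re) c,
    abs_of_pos (inv_pos.mpr hc), smul_eq_mul, mul_left_comm]

lemma exists_abs_stableDensity_le (hα : 0 < α) (hγ : 0 < Real.cos (Real.pi * γ / 2))
    (ht : 0 < t) : ∃ B, ∀ x, |stableDensity α γ t x| ≤ B := by
  refine ⟨1 / (2 * Real.pi) *
    ∫ θ : ℝ, Real.exp (-(t * Real.cos (Real.pi * γ / 2)) * |θ| ^ α), fun x => ?_⟩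
  rw [stableDensity_eq_integral_re, abs_mul, abs_of_pos (by positivity), ← Real.norm_eq_abs]
  gcongr
  exact norm_integral_le_of_norm_le (integrable_exp_neg_mul_abs_rpow hα (mul_pos ht hγ))
    (.of_forall fun θ => (Complex.abs_re_le_norm _).trans_eq
      (norm_stableFourierKernel hα.ne' x θ))

lemma stableDensity_sub (hα : 0 < α) (hγ : 0 < Real.cos (Real.pi * γ / 2)) (ht : 0 < t)
    (x y : ℝ) :
    stableDensity α γ t x - stableDensity α γ t y = 1 / (2 * Real.pi) *
      ∫ θ, (stableFourierKernel α γ t x θ - stableFourierKernel α γ t y θ).re := by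
  have integrable_re (z : ℝ) : Integrable fun θ => (stableFourierKernel α γ t z θ).re :=
    (integrable_stableFourierKernel hα hγ ht z).re
  simp only [stableDensity_eq_integral_re, Complex.sub_re]
  rw [integral_sub (integrable_re x) (integrable_re y), mul_sub]

lemma exists_lipschitzWith_stableDensity (hα : 0 < α) (hγ : 0 < Real.cos (Real.pi * γ / 2))
    (ht : 0 < t) : ∃ L, LipschitzWith L (stableDensity α γ t) := by
  let L := 1 / (2 * Real.pi) *
    ∫ θ : ℝ, |θ| ^ (1 : ℝ) * Real.exp (-(t * Real.cos (Real.pi * γ / 2)) * |θ| ^ α)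
  refine ⟨L.toNNReal, LipschitzWith.of_dist_le' fun x y => ?_⟩
  rw [Real.dist_eq, Real.dist_eq, stableDensity_sub hα hγ ht, abs_mul,
    abs_of_pos (by positivity), mul_assoc, ← integral_mul_const, ← Real.norm_eq_abs]
  gcongr
  exact norm_integral_le_of_norm_le ((integrable_abs_rpow_mul_exp_neg_mul_abs_rpow
    (by norm_num) hα (mul_pos ht hγ)).mul_const _)
    (.of_forall fun θ => (Complex.abs_re_le_norm _).trans
      (norm_stableFourierKernel_sub_le hα.ne' x y θ))

end StableDensity

lemma cos_pi_mul_div_two_pos {γ : ℝ} (hγ : |γ| < 1) : 0 < Real.cos (Real.pi * γ / 2) := by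
  obtain ⟨h_lower, h_upper⟩ := abs_lt.mp hγ
  apply Real.cos_pos_of_mem_Ioo
  constructor <;> nlinarith [Real.pi_pos]

theorem stmt6_general {α γ T l M : ℝ} (hα : 1 < α) (hα2 : α < 2)
    (hγ : 0 < Real.cos (Real.pi * γ / 2)) (hT : 0 < T) {φ : ℝ → ℝ}
    (hφ : AEStronglyMeasurable φ (volume.restrict (Ioc 0 T))) (hM : ∀ t ∈ Ioc 0 T, ‖φ t‖ ≤ M)
    (hl : Tendsto φ (𝓝[>] 0) (𝓝 l)) :
    Tendsto
      (fun y : ℝ =>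
        ∫ t in (0 : ℝ)..T,
          (stableDensity α γ t y - stableDensity α γ t 0) / |y| ^ (α - 1) * φ t)
      (𝓝[>] 0)
      (𝓝 ((α * ∫ u in Ioi (0 : ℝ),
          (stableDensity α γ 1 u - stableDensity α γ 1 0) / u ^ α) * l)) ∧
    Tendsto
      (fun y : ℝ =>
        ∫ t in (0 : ℝ)..T,
          (stableDensity α γ t y - stableDensity α γ t 0) / |y| ^ (α - 1) * φ t)
      (𝓝[<] 0)
      (𝓝 ((α * ∫ u in Ioi (0 : ℝ),
          (stableDensity α γ 1 (-u) - stableDensity α γ 1 0) / u ^ α) * l)) := by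
  have hα0 : 0 < α := one_pos.trans hα
  obtain ⟨L, hL⟩ := exists_lipschitzWith_stableDensity hα0 hγ one_pos
  obtain ⟨B, hB⟩ := exists_abs_stableDensity_le hα0 hγ one_pos
  have right := isSelfSimilar_stableDensity.tendsto_integral_increment_div_mul hα hα2 hL hB hT
    hφ hM hl
  have reflected := isSelfSimilar_stableDensity.comp_neg.tendsto_integral_increment_div_mul
    hα hα2 (hL.comp (LipschitzWith.id.neg)) (fun x => hB (-x)) hT hφ hM hl
  have neg_tendsto : Tendsto (fun y : ℝ => -y) (𝓝[<] 0) (𝓝[>] 0) := by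
    simpa only [neg_zero] using tendsto_neg_nhdsLT (a := (0 : ℝ))
  refine ⟨right, ?_⟩
  simpa only [Function.comp_def, neg_neg, neg_zero, abs_neg] using reflected.comp neg_tendsto

/-- Lemma 7.2: for continuous `φ` on `[0,T]`,
`∫₀^T (𝔭_t(y) − 𝔭_t(0))/|y|^{α−1} · φ(t) dt → b^± φ(0)` as `y → 0±`, where
`b^± = α ∫₀^∞ (𝔭₁(±u) − 𝔭₁(0))/u^α du`. -/
theorem stmt6 (α γ T : ℝ) (hα : 1 < α) (hα2 : α < 2) (hγ : |γ| ≤ 2 - α) (hT : 0 < T)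
    (φ : ℝ → ℝ) (hφ : ContinuousOn φ (Set.Icc 0 T)) :
    Tendsto
      (fun y : ℝ =>
        ∫ t in (0:ℝ)..T,
          (stableDensity α γ t y - stableDensity α γ t 0) / |y| ^ (α - 1) * φ t)
      (𝓝[>] 0)
      (𝓝 ((α * ∫ u in Set.Ioi (0:ℝ),
          (stableDensity α γ 1 u - stableDensity α γ 1 0) / u ^ α) * φ 0)) ∧
    Tendsto
      (fun y : ℝ =>
        ∫ t in (0:ℝ)..T,
          (stableDensity α γ t y - stableDensity α γ t 0) / |y| ^ (α - 1) * φ t)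
      (𝓝[<] 0)
      (𝓝 ((α * ∫ u in Set.Ioi (0:ℝ),
          (stableDensity α γ 1 (-u) - stableDensity α γ 1 0) / u ^ α) * φ 0)) := by
  obtain ⟨M, hM⟩ := isCompact_Icc.exists_bound_of_continuousOn hφ
  have hl : Tendsto φ (𝓝[>] 0) (𝓝 (φ 0)) := by
    rw [← nhdsWithin_Ioc_eq_nhdsGT hT]
    exact (hφ 0 (left_mem_Icc.mpr hT.le)).mono Ioc_subset_Icc_self
  exact stmt6_general hα hα2 (cos_pi_mul_div_two_pos (by linarith)) hT
    ((hφ.mono Ioc_subset_Icc_self).aestronglyMeasurable measurableSet_Ioc)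
    (fun t ht => hM t (Ioc_subset_Icc_self ht)) hl
end
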